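/- The map φ : End(X_n^ℤ, σ_n) → ASL_n sending σ_n^i ∘ f_P (for i ∈ ℤ and P ∈ \widetilde{P}_n) to the pair ([P], α), where [P] is the minimal representative of P and α is the annotation of [P] defined by α((q)κ) = i + |Λ(ε, q)| for each state q of P, is a monoid isomorphism; moreover its restriction to Aut(X_n^ℤ, σ_n) is a group isomorphism onto AL_n. -/

import Mathlib

/-!
The proof replaces the combinatorics of minimal transducers by one relation. Say that an annotated
transducer `(T, γ)` induces `f` (`Ann T γ f`) when `T` is core and strongly synchronizing, `γ` is an
annotation, and for every bi-infinite `x` with its unique run of states `s`, the sequence `f x` read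
from position `i + γ (s i)` on is `h_{s i}` applied to `x` read from `i` on. This determines `f`, and
it is preserved by every construction involved: identifying ω-equivalent states (`Ann.quot`),
removing incomplete response at the cost of adding `|Λ(ε, q)|` to `γ` (`Ann.minRep`), and taking
products of transducers, where annotations add (`Ann.mul`). Hence `([P], α)` induces `σ^i ∘ f_P`
(`PtildeMem.rep`) and `(L, α)(M, β)` induces the composite (`Rep.mul`).

Conversely a minimal annotated transducer is recovered from the map it induces. For a state `q`,
choose a past of `x` that forces `q`; then `γ q` is the first coordinate of `f x` not determined by
this past, because `q` has complete response, and `h_q` is what `f` writes from there on. So two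
minimal annotated transducers inducing the same map have the same states up to ω-equivalence, with
the same annotations (`Ann.exists_match`, `Rep.aslEq`). The only degenerate case is a constant map,
which corresponds to `(Z_a, ∞)`. This makes `φ` well defined, multiplicative and injective. It is
defined on all endomorphisms by the Curtis–Hedlund–Lyndon theorem (`exists_radius`,
`exists_ptilde`), and it is surjective since reading off outputs at the annotated positions defines
an endomorphism (`exists_induced`).

For the units, let `f` be an automorphism with inverse `g`. With a past forcing `q` fixed, a sequence
lies in the image of `h_q` exactly when `g` gives back that past, a condition on finitely many
coordinates; so `h_q` is injective with clopen image (`Ann.injective_isClopen`), and the transducers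
of `f` and `g` are inverse to each other. In the other direction, an inverse `U` of `L ∈ L_n` in
`SO_n` satisfies SL3: if `Γ` labels a circuit of `U` with output `w`, then reading `w` around a
circuit of `L` writes a word which has the length of `Γ`, as `UL` is the identity, and the length of
`w`, as `L` satisfies SL3 (`sl3_of_inverse`). So `U` carries an annotation (`exists_annotation`) and
induces an endomorphism inverse to `f` up to a power of the shift (`Rep.exists_inverse`).
-/


/-!
Common definitions: transducers over a finite alphabet, strong synchronization,
cores, ω-equivalence, minimal representatives, the monoids `M_n`, `SL_n`, `SO_n`,
the groups `O_n`, `L_n`, annotations, and the two-sided full shift.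

Throughout, the alphabet is `Fin (n + 2)`, i.e. an alphabet of size `n + 2 ≥ 2`.
-/

namespace ShiftPaper

/-- The alphabet with `n + 2` letters. -/
abbrev A (n : ℕ) : Type := Fin (n + 2)

/-- Finite words over the alphabet. -/
abbrev Word (n : ℕ) : Type := List (A n)

/-- A transducer over the alphabet `A n`: a finite nonempty set of states together with a
transition function `tr` and an output function `out` (possibly asynchronous). -/
structure Transducer (n : ℕ) where
  Q : Type
  fin : Finite Q
  ne : Nonempty Q
  tr : A n → Q → Q
  out : A n → Q → Word n

variable {n : ℕ}

instance (T : Transducer n) : Finite T.Q := T.fin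
instance (T : Transducer n) : Nonempty T.Q := T.ne

/-- Extended transition function, reading a finite word from left to right. -/
def dsts (T : Transducer n) : Word n → T.Q → T.Q
  | [], q => q
  | a :: w, q => dsts T w (T.tr a q)

/-- Extended output function along a finite word. -/
def outs (T : Transducer n) : Word n → T.Q → Word n
  | [], _ => []
  | a :: w, q => T.out a q ++ outs T w (T.tr a q)

/-- Every (nonempty) circuit in the transducer has nonempty output. -/
def CircuitsNonempty (T : Transducer n) : Prop :=
  ∀ (q : T.Q) (w : Word n), w ≠ [] → dsts T w q = q → outs T w q ≠ []

/-- `T` is synchronizing at level `k`: the state reached after reading any word of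
length `k` does not depend on the starting state. -/
def SyncAt (T : Transducer n) (k : ℕ) : Prop :=
  ∀ w : Word n, w.length = k → ∀ p q : T.Q, dsts T w p = dsts T w q

/-- `T` is strongly synchronizing: synchronizing at some level. -/
def StronglySync (T : Transducer n) : Prop := ∃ k, SyncAt T k

/-- The minimal synchronizing level (junk value `0` if `T` is not strongly synchronizing). -/
noncomputable def syncLevel (T : Transducer n) : ℕ := by
  classical
  exact if h : StronglySync T then Nat.find h else 0

/-- The infinite output stream produced from state `q` on reading the infinite input `x`
(the map `h_q`).  (Well defined on transducers all of whose circuits have nonempty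
output; junk values otherwise.) -/
noncomputable def hmap (T : Transducer n) (q : T.Q) (x : ℕ → A n) : ℕ → A n := fun m => by
  classical
  exact if h : ∃ k, m < (outs T ((List.range k).map x) q).length then
    (outs T ((List.range h.choose).map x) q).getD m default
  else default

/-- ω-equality of transducers: a bijection of the state sets under which corresponding
states induce the same maps on infinite sequences. -/
def OmegaEq (T U : Transducer n) : Prop :=
  ∃ f : T.Q ≃ U.Q, ∀ q, hmap T q = hmap U (f q)

/-- The setoid on states given by ω-equivalence of states. -/
def omegaSetoid (T : Transducer n) : Setoid T.Q :=
  ⟨fun p q => hmap T p = hmap T q, ⟨fun _ => rfl, fun h => h.symm, fun h h' => h.trans h'⟩⟩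

/-- The transducer obtained by identifying ω-equivalent states. -/
noncomputable def quotT (T : Transducer n) : Transducer n where
  Q := Quotient (omegaSetoid T)
  fin := Finite.of_surjective (Quotient.mk (omegaSetoid T))
    fun c => ⟨Quotient.out c, Quotient.out_eq c⟩
  ne := ⟨Quotient.mk (omegaSetoid T) (Classical.choice T.ne)⟩
  tr := fun a c => Quotient.mk (omegaSetoid T) (T.tr a (Quotient.out c))
  out := fun a c => T.out a (Quotient.out c)

/-- `q` is a state of the core of `T`: it is forced by some word whose length is a
synchronizing level of `T`. -/
def CoreState (T : Transducer n) (q : T.Q) : Prop :=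
  ∃ (k : ℕ) (w : Word n), SyncAt T k ∧ w.length = k ∧ ∀ p, dsts T w p = q

/-- `T` is core: it equals its core. -/
def IsCore (T : Transducer n) : Prop := ∀ q : T.Q, CoreState T q

/-- Auxiliary predicate used to make the core construction total. -/
def CoreStateE (T : Transducer n) (q : T.Q) : Prop :=
  CoreState T q ∨ ∀ p, ¬ CoreState T p

/-- The core of `T` (as a transducer). -/
noncomputable def coreT (T : Transducer n) : Transducer n where
  Q := {q : T.Q // CoreStateE T q}
  fin := Subtype.finite
  ne := by
    classical
    by_cases h : ∀ p, ¬ CoreState T p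
    · exact ⟨⟨Classical.choice T.ne, Or.inr h⟩⟩
    · push_neg at h
      obtain ⟨p, hp⟩ := h
      exact ⟨⟨p, Or.inl hp⟩⟩
  tr := fun a q => by
    classical
    exact if h : CoreStateE T (T.tr a q.1) then ⟨T.tr a q.1, h⟩ else q
  out := fun a q => T.out a q.1

/-- There exist two inputs whose outputs from `q` disagree at position `j`. -/
def Disagree (T : Transducer n) (q : T.Q) (j : ℕ) : Prop :=
  ∃ x y : ℕ → A n, hmap T q x j ≠ hmap T q y j

/-- The extent of incomplete response of `q` (the length of `Λ(ε,q)`) is finite. -/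
def FiniteExtent (T : Transducer n) (q : T.Q) : Prop := ∃ j, Disagree T q j

/-- The extent of incomplete response `|Λ(ε,q)|` of the state `q`
(junk value `0` when it is infinite). -/
noncomputable def extentLen (T : Transducer n) (q : T.Q) : ℕ := by
  classical
  exact if h : FiniteExtent T q then Nat.find h else 0

/-- The word `Λ(ε,q)`: the greatest common prefix of all outputs from `q`. -/
noncomputable def extentWord (T : Transducer n) (q : T.Q) : Word n :=
  (List.range (extentLen T q)).map (hmap T q fun _ => default)

/-- `T` has no states of incomplete response (`Λ(ε,q) = ε` for every state `q`). -/
def NoIncomplete (T : Transducer n) : Prop := ∀ q : T.Q, Disagree T q 0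

/-- No two distinct states of `T` are ω-equivalent. -/
def WeaklyMinimal (T : Transducer n) : Prop :=
  ∀ p q : T.Q, hmap T p = hmap T q → p = q

/-- The Lipschitz condition (SL3): around any circuit the output is as long as the input. -/
def SL3 (T : Transducer n) : Prop :=
  ∀ (q : T.Q) (Γ : Word n), dsts T Γ q = q → (outs T Γ q).length = Γ.length

/-- `T` is synchronous: it writes exactly one letter for each letter read. -/
def Synchronous (T : Transducer n) : Prop :=
  ∀ (a : A n) (q : T.Q), (T.out a q).length = 1

/-- Boolean lexicographic comparison of words. -/
def lexLtB : Word n → Word n → Bool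
  | [], [] => false
  | [], _ :: _ => true
  | _ :: _, [] => false
  | a :: u, b :: v => if a < b then true else if b < a then false else lexLtB u v

/-- The lexicographically least rotation of a word. -/
def minimalRot (w : Word n) : Word n :=
  ((List.range w.length).map fun i => w.rotate i).foldl
    (fun acc r => if lexLtB r acc then r else acc) w

/-- A nonempty word is prime if it is not a power of a strictly shorter word. -/
def IsPrime (w : Word n) : Prop :=
  w ≠ [] ∧ ∀ (u : Word n) (k : ℕ), w = (List.replicate k u).flatten → w.length ≤ u.length

/-- `v` is a rotation of `u`. -/
def RotEq (u v : Word n) : Prop := ∃ i : ℕ, v = u.rotate i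

/-- The prime word of which the (eventually constant single) image point of `T` is a power
(used for the degenerate transducers `Z_x`; junk values otherwise). -/
noncomputable def periodicRoot (T : Transducer n) : Word n := by
  classical
  exact
    if hp : ∃ m, 0 < m ∧ ∀ j, hmap T (Classical.choice T.ne) (fun _ => default) (j + m) =
        hmap T (Classical.choice T.ne) (fun _ => default) j
    then (List.range (Nat.find hp)).map (hmap T (Classical.choice T.ne) fun _ => default)
    else [default]

/-- Remove the incomplete response from the states of `T`: replace the output `λ(a,q)` by
`Λ(a,q) - Λ(ε,q)`.  (In the degenerate case where the extents of incomplete response are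
infinite, all outputs are replaced by the minimal rotation of the prime root of the unique
image point, so that minimising produces the transducer `Z_x` of the paper.) -/
noncomputable def removeIncomplete (T : Transducer n) : Transducer n where
  Q := T.Q
  fin := T.fin
  ne := T.ne
  tr := T.tr
  out := fun a q => by
    classical
    exact if ∀ p : T.Q, FiniteExtent T p then
      (T.out a q ++ extentWord T (T.tr a q)).drop (extentLen T q)
    else minimalRot (periodicRoot T)

/-- The minimal representative `[T]` of a strongly synchronizing core transducer `T`:
remove incomplete response, take the core, and identify ω-equivalent states. -/
noncomputable def minRep (T : Transducer n) : Transducer n :=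
  quotT (coreT (removeIncomplete T))

/-- The single state transducer `Z_x` which outputs `x` on every input letter. -/
def Zword (x : Word n) : Transducer n where
  Q := PUnit
  fin := inferInstance
  ne := ⟨PUnit.unit⟩
  tr := fun _ q => q
  out := fun _ _ => x

/-- The single state identity transducer. -/
def oneT : Transducer n where
  Q := PUnit
  fin := inferInstance
  ne := ⟨PUnit.unit⟩
  tr := fun _ q => q
  out := fun a _ => [a]

/-- The product transducer `T * U`: the outputs of `T` are processed by `U`. -/
noncomputable def prodT (T U : Transducer n) : Transducer n where
  Q := T.Q × U.Q
  fin := inferInstance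
  ne := ⟨⟨Classical.choice T.ne, Classical.choice U.ne⟩⟩
  tr := fun a p => (T.tr a p.1, dsts U (T.out a p.1) p.2)
  out := fun a p => outs U (T.out a p.1) p.2

/-- The product in `M_n`: the minimal representative of the core of `T * U`. -/
noncomputable def mulT (T U : Transducer n) : Transducer n :=
  minRep (coreT (prodT T U))

/-- Membership in the monoid `M_n` of minimal, strongly synchronizing, core transducers
(a transducer is minimal if it is core, has no states of incomplete response and no two
distinct ω-equivalent states, or it is one of the degenerate transducers `Z_x` for a prime
word `x` which is least in its rotation class). -/
def MnMem (T : Transducer n) : Prop :=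
  CircuitsNonempty T ∧ StronglySync T ∧ IsCore T ∧
    ((NoIncomplete T ∧ WeaklyMinimal T) ∨
      ∃ x : Word n, IsPrime x ∧ minimalRot x = x ∧ OmegaEq T (Zword x))

/-- Membership in the monoid `SL_n`: elements of `M_n` satisfying the Lipschitz condition. -/
def SLnMem (T : Transducer n) : Prop := MnMem T ∧ SL3 T

/-- Membership in the monoid `SO_n`: elements of `M_n` all of whose states induce injective
maps with clopen image. -/
def SOnMem (T : Transducer n) : Prop :=
  MnMem T ∧ ∀ q : T.Q, Function.Injective (hmap T q) ∧ IsClopen (Set.range (hmap T q))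

/-- Membership in the group `O_n`: invertible elements of `SO_n` (with inverse in `SO_n`);
equality in `M_n` is ω-equality. -/
def OnMem (T : Transducer n) : Prop :=
  SOnMem T ∧ ∃ U : Transducer n, SOnMem U ∧ OmegaEq (mulT T U) oneT ∧ OmegaEq (mulT U T) oneT

/-- Membership in the group `L_n = O_n ∩ SL_n`. -/
def LnMem (T : Transducer n) : Prop := OnMem T ∧ SL3 T

/-- Membership in the monoid `\widetilde{P}_n` of weakly minimal, synchronous, strongly
synchronizing core transducers. -/
def PtildeMem (T : Transducer n) : Prop :=
  CircuitsNonempty T ∧ StronglySync T ∧ IsCore T ∧ Synchronous T ∧ WeaklyMinimal T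

/-- The product in `\widetilde{P}_n`: take the product transducer, identify ω-equivalent
states and take the core. -/
noncomputable def ptildeMul (P R : Transducer n) : Transducer n :=
  coreT (quotT (prodT P R))

/-- An annotation of (a strongly synchronizing core transducer satisfying the Lipschitz
condition) `T`. -/
def Annotation (T : Transducer n) (α : T.Q → ℤ) : Prop :=
  ∀ (q : T.Q) (Γ : Word n),
    α (dsts T Γ q) = α q + ((outs T Γ q).length : ℤ) - (Γ.length : ℤ)

/-! ### The two-sided full shift -/

/-- The space of bi-infinite sequences over the alphabet `A n`. -/
abbrev FullShift (n : ℕ) : Type := ℤ → A n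

/-- The `i`-th power of the shift map: `(shiftZ i x) j = x (j - i)`.
The shift `σ` itself is `shiftZ 1`. -/
def shiftZ (i : ℤ) (x : FullShift n) : FullShift n := fun j => x (j - i)

/-- The monoid of endomorphisms of the shift dynamical system: continuous maps on the
space of bi-infinite sequences commuting with the shift. -/
def EndShift (n : ℕ) : Type :=
  {f : FullShift n → FullShift n // Continuous f ∧ ∀ x, f (shiftZ 1 x) = shiftZ 1 (f x)}

/-- The group of automorphisms of the shift dynamical system: homeomorphisms of the
space of bi-infinite sequences commuting with the shift. -/
def AutShift (n : ℕ) : Type :=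
  {f : FullShift n → FullShift n // Continuous f ∧ (∀ x, f (shiftZ 1 x) = shiftZ 1 (f x)) ∧
    ∃ g : FullShift n → FullShift n, Continuous g ∧ (∀ x, g (f x) = x) ∧ ∀ x, f (g x) = x}

/-- The window `x_{i-k} … x_{i-1}` of a bi-infinite sequence. -/
def window (x : FullShift n) (i : ℤ) (k : ℕ) : Word n :=
  (List.range k).map fun j => x (i - (k : ℤ) + (j : ℤ))

/-- The state of `L` forced by the window `x_{i-k} … x_{i-1}`. -/
noncomputable def forced (L : Transducer n) (k : ℕ) (x : FullShift n) (i : ℤ) : L.Q :=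
  dsts L (window x i k) (Classical.choice L.ne)

/-- The output word written while processing the letter `x i`. -/
noncomputable def outAt (L : Transducer n) (k : ℕ) (x : FullShift n) (i : ℤ) : Word n :=
  L.out (x i) (forced L k x i)

/-- The defining specification of the map `(L, α) : X_n^ℤ → X_n^ℤ` induced by an annotated
transducer: for each index `i`, with `q` the state forced by `x_{i-k} … x_{i-1}` and
`w = λ(x_i, q)`, the word `w` occupies the coordinates `i + α q, …, i + α q + |w| - 1`
of the image sequence `y`. -/
def SpecAt (L : Transducer n) (α : L.Q → ℤ) (k : ℕ) (x y : FullShift n) : Prop :=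
  ∀ (i : ℤ) (j : ℕ), j < (outAt L k x i).length →
    y (i + α (forced L k x i) + (j : ℤ)) = (outAt L k x i).getD j default

/-- The map `(L, α) : X_n^ℤ → X_n^ℤ` induced by an annotated transducer. -/
noncomputable def inducedMap (L : Transducer n) (α : L.Q → ℤ) (k : ℕ) :
    FullShift n → FullShift n := fun x m => by
  classical
  exact if h : ∃ p : ℤ × ℕ, p.2 < (outAt L k x p.1).length ∧
      p.1 + α (forced L k x p.1) + (p.2 : ℤ) = m then
    (outAt L k x h.choose.1).getD h.choose.2 default
  else default

/-- The map `κ` from the states of `T` to the states of its minimal representative. -/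
noncomputable def kappa (T : Transducer n) (q : T.Q) : (minRep T).Q := by
  classical
  exact Quotient.mk (omegaSetoid (coreT (removeIncomplete T)))
    (if h : CoreStateE (removeIncomplete T) q then
      (⟨q, h⟩ : (coreT (removeIncomplete T)).Q)
    else Classical.choice (coreT (removeIncomplete T)).ne)

/-- The annotation `\overline{α + β}` of the product `LM` in `SL_n`: its value at the
state `κ (s, t)` is `α s + β t + |Λ(ε, (s,t))|`, the extent of incomplete response being
computed in `core (L * M)`. -/
noncomputable def annProd (L M : Transducer n) (α : L.Q → ℤ) (β : M.Q → ℤ) :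
    (mulT L M).Q → ℤ := fun c =>
  α (Quotient.out c).1.1.1 + β (Quotient.out c).1.1.2 +
    (extentLen (coreT (prodT L M)) (Quotient.out c).1 : ℤ)

/-- The set `ASL_n` of annotated transducers: pairs of a transducer and an integer-valued
function on its states. -/
def ASLPair (n : ℕ) := Σ T : Transducer n, T.Q → ℤ

/-- Membership in `ASL_n`: either the transducer is in `SL_n` with no states of incomplete
response and the function is an annotation of it, or it is a degenerate `Z_a` for a letter
`a` (whose `annotation ∞` we model by allowing an arbitrary function). -/
def ASLMem (p : ASLPair n) : Prop :=
  (SLnMem p.1 ∧ NoIncomplete p.1 ∧ Annotation p.1 p.2) ∨ ∃ a : A n, OmegaEq p.1 (Zword [a])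

/-- Equality in `ASL_n`: ω-equality of the transducers matching up the annotations, with
the two elements possibly both being the degenerate `(Z_a, ∞)` for the same letter `a`. -/
def ASLEq (p q : ASLPair n) : Prop :=
  (∃ f : p.1.Q ≃ q.1.Q, (∀ s, hmap p.1 s = hmap q.1 (f s)) ∧ ∀ s, q.2 (f s) = p.2 s) ∨
    ∃ a : A n, OmegaEq p.1 (Zword [a]) ∧ OmegaEq q.1 (Zword [a])

/-- The product on `ASL_n`: `(L, α)(M, β) = (LM, \overline{α + β})`. -/
noncomputable def ASLmul (p q : ASLPair n) : ASLPair n :=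
  ⟨mulT p.1 q.1, annProd p.1 q.1 p.2 q.2⟩

/-- The identity `(1, 0)` of `ASL_n`. -/
def ASLone : ASLPair n := ⟨oneT, fun _ => 0⟩

/-- Membership in `AL_n`: annotated elements of `L_n`. -/
def ALMem (p : ASLPair n) : Prop := LnMem p.1 ∧ Annotation p.1 p.2

/-- The element `([P], α)` of `ASL_n` with `α ((q) κ) = i + |Λ(ε, q)|`, associated to the
endomorphism `σ^i ∘ f_P`. -/
noncomputable def phiPair (P : Transducer n) (i : ℤ) : ASLPair n :=
  ⟨minRep P, fun c => i + (extentLen P (Quotient.out c).1 : ℤ)⟩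

/-- The unique state at the base of a circuit labelled `Γ` (junk value if there is none). -/
noncomputable def qcirc (T : Transducer n) (Γ : Word n) : T.Q := by
  classical
  exact if h : ∃ q, dsts T Γ q = q then h.choose else Classical.choice T.ne

/-- The prime root of a word: the prime word of which `w` is a power
(junk value `w` if there is none). -/
noncomputable def primeRoot (w : Word n) : Word n := by
  classical
  exact if h : ∃ u : Word n, IsPrime u ∧ ∃ k, w = (List.replicate k u).flatten then h.choose
  else w

/-- The action of `T ∈ M_n` on (rotation classes of) prime words: `Γ` is sent to the prime
word of which `λ(Γ, q_Γ)` is a power, where `q_Γ` is the unique state with a circuit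
labelled `Γ` based at it. -/
noncomputable def PiAct (T : Transducer n) (Γ : Word n) : Word n :=
  primeRoot (outs T Γ (qcirc T Γ))

/-- The cylinder set of one-sided infinite sequences with prefix `ν`. -/
def Cyl (ν : Word n) : Set (ℕ → A n) :=
  {x | ∀ (j : ℕ) (h : j < ν.length), x j = ν.get ⟨j, h⟩}

/-- `m_q = |B(q)|`: the least cardinality of a finite set of words whose cylinders are
contained in, and together cover, the image of `h_q`. -/
noncomputable def mq (T : Transducer n) (q : T.Q) : ℕ :=
  sInf {m : ℕ | ∃ S : Finset (Word n), S.card = m ∧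
    (∀ ν ∈ S, Cyl ν ⊆ Set.range (hmap T q)) ∧
    (⋃ ν ∈ S, Cyl ν) = Set.range (hmap T q)}

/-- The signature homomorphism `sig : O_n → (ℤ/(n-1))^×`, as an element of `ℤ/(n-1)`
(for our alphabet of size `n + 2`, the modulus is `n + 1`). -/
noncomputable def sigT (T : Transducer n) : ZMod (n + 1) :=
  (mq T (Classical.choice T.ne) : ZMod (n + 1))

/-! ### Words, one-sided sequences and output growth -/

/-- The prefix of length `k` of a one-sided sequence. -/
def pre (y : ℕ → A n) (k : ℕ) : Word n := (List.range k).map y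

/-- The sequence obtained by writing the word `w` in front of the sequence `y`. -/
def app (w : Word n) (y : ℕ → A n) : ℕ → A n := fun m => w.getD m (y (m - w.length))

/-- The sequence `y` with its first `k` letters removed. -/
def drp (y : ℕ → A n) (k : ℕ) : ℕ → A n := fun m => y (k + m)

/-- The one-sided sequence `x i, x (i + 1), …` read off a bi-infinite sequence. -/
def tail (x : FullShift n) (i : ℤ) : ℕ → A n := fun j => x (i + j)

@[simp] lemma pre_length (y : ℕ → A n) (k : ℕ) : (pre y k).length = k := by simp [pre]

lemma pre_add (y : ℕ → A n) (k l : ℕ) : pre y (k + l) = pre y k ++ pre (drp y k) l := by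
  simp [pre, List.range_add, drp, Function.comp_def]

lemma getD_pre (y : ℕ → A n) {k m : ℕ} (h : m < k) (d : A n) : (pre y k).getD m d = y m := by
  simp [pre, List.getD_eq_getElem?_getD, h]

lemma app_lt (w : Word n) (y : ℕ → A n) {m : ℕ} (h : m < w.length) (d : A n) :
    app w y m = w.getD m d := by
  simp [app, List.getD_eq_getElem?_getD, h]

lemma app_ge (w : Word n) (y : ℕ → A n) (m : ℕ) : app w y (w.length + m) = y m := by
  simp [app, List.getD_eq_getElem?_getD]

lemma app_ge' (w : Word n) (y : ℕ → A n) {m : ℕ} (h : w.length ≤ m) :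
    app w y m = y (m - w.length) := by
  simp [app, List.getD_eq_getElem?_getD, h]

lemma drp_app (w : Word n) (y : ℕ → A n) : drp (app w y) w.length = y :=
  funext fun m => app_ge w y m

lemma app_injective (w : Word n) : Function.Injective (app w) := fun y y' h => by
  rw [← drp_app w y, h, drp_app]

@[simp] lemma app_nil (y : ℕ → A n) : app [] y = y := by
  funext m; simp [app]

lemma app_append (u v : Word n) (y : ℕ → A n) : app (u ++ v) y = app u (app v y) := by
  funext m
  by_cases h : m < u.length
  · rw [app_lt _ _ (by simp; omega) default, app_lt _ _ h default, List.getD_append _ _ _ _ h]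
  · rw [app_ge' u _ (by omega)]
    by_cases h' : m < u.length + v.length
    · rw [app_lt _ _ (by simp; omega) default, app_lt _ _ (by omega) default,
        List.getD_append_right _ _ _ _ (by omega)]
    · rw [app_ge' _ _ (by simp; omega), app_ge' _ _ (by omega), List.length_append, Nat.sub_sub]

lemma app_pre_drp (y : ℕ → A n) (k : ℕ) : app (pre y k) (drp y k) = y := by
  funext m
  by_cases h : m < k
  · rw [app_lt _ _ (by simpa) default, getD_pre _ h]
  · rw [app_ge' _ _ (by simpa using h)]
    simp only [drp, pre_length]; congr 1; omega

lemma pre_app (w : Word n) (y : ℕ → A n) : pre (app w y) w.length = w := by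
  apply List.ext_getElem (by simp)
  intro i h1 h2
  rw [← List.getD_eq_getElem _ default, ← List.getD_eq_getElem _ default, getD_pre _ h2,
    app_lt _ _ h2]

lemma pre_app_add (w : Word n) (y : ℕ → A n) (k : ℕ) :
    pre (app w y) (w.length + k) = w ++ pre y k := by
  rw [pre_add, pre_app, drp_app]

lemma drp_tail (x : FullShift n) (i : ℤ) (k : ℕ) : drp (tail x i) k = tail x (i + k) := by
  funext m; simp [drp, tail, add_assoc]

lemma app_pre_eq_of_eq {w : Word n} {y z : ℕ → A n} (h : app w y = z) : w = pre z w.length := by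
  rw [← h, pre_app]

lemma dsts_append (T : Transducer n) (u v : Word n) (q : T.Q) :
    dsts T (u ++ v) q = dsts T v (dsts T u q) := by
  induction u generalizing q with
  | nil => rfl
  | cons a u ih => simp [dsts, ih]

lemma outs_append (T : Transducer n) (u v : Word n) (q : T.Q) :
    outs T (u ++ v) q = outs T u q ++ outs T v (dsts T u q) := by
  induction u generalizing q with
  | nil => rfl
  | cons a u ih => simp [dsts, outs, ih]

lemma outs_singleton (T : Transducer n) (a : A n) (q : T.Q) : outs T [a] q = T.out a q := by
  simp [outs]

/-- Outputs become uniformly long on long inputs; this is what makes `hmap` meaningful. -/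
def Grow (T : Transducer n) : Prop :=
  ∀ m, ∃ N, ∀ (w : Word n) (q : T.Q), N ≤ w.length → m ≤ (outs T w q).length

lemma hmap_get {T : Transducer n} {q : T.Q} {x : ℕ → A n} {m k : ℕ}
    (h : m < (outs T (pre x k) q).length) (d : A n) :
    hmap T q x m = (outs T (pre x k) q).getD m d := by
  classical
  have hex : ∃ k, m < (outs T ((List.range k).map x) q).length := ⟨k, h⟩
  have hc := hex.choose_spec
  have : hmap T q x m = (outs T (pre x hex.choose) q).getD m default := by
    simp only [hmap]; rw [dif_pos hex]; rfl
  rw [this]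
  change m < (outs T (pre x hex.choose) q).length at hc
  generalize hex.choose = k' at hc
  have key : ∀ {k l : ℕ} (_ : k ≤ l) (_ : m < (outs T (pre x k) q).length) (d d' : A n),
      (outs T (pre x k) q).getD m d = (outs T (pre x l) q).getD m d' := by
    intro k l hkl hm d d'
    obtain ⟨j, rfl⟩ := Nat.exists_eq_add_of_le hkl
    rw [pre_add, outs_append, List.getD_append _ _ _ _ hm, List.getD_eq_getElem _ _ hm,
      List.getD_eq_getElem _ _ hm]
  rcases le_total k k' with hk | hk
  · exact (key hk h _ _).symm
  · exact key hk hc _ _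

lemma hmap_app {T : Transducer n} (g : Grow T) (q : T.Q) (w : Word n) (y : ℕ → A n) :
    hmap T q (app w y) = app (outs T w q) (hmap T (dsts T w q) y) := by
  funext m
  obtain ⟨N, hN⟩ := g (m + 1)
  have h1 := hN (pre y N) (dsts T w q) (by simp)
  have e : outs T (pre (app w y) (w.length + N)) q
      = outs T w q ++ outs T (pre y N) (dsts T w q) := by rw [pre_app_add, outs_append]
  have h2 : m < (outs T (pre (app w y) (w.length + N)) q).length := by
    rw [e, List.length_append]; omega
  rw [hmap_get h2 default, e]
  by_cases h : m < (outs T w q).length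
  · rw [app_lt _ _ h default, List.getD_append _ _ _ _ h]
  · rw [app_ge' _ _ (by omega), List.getD_append_right _ _ _ _ (by omega),
      hmap_get (k := N) (by omega) default]

lemma hmap_split {T : Transducer n} (g : Grow T) (q : T.Q) (y : ℕ → A n) (k : ℕ) :
    hmap T q y = app (outs T (pre y k) q) (hmap T (dsts T (pre y k) q) (drp y k)) := by
  conv_lhs => rw [← app_pre_drp y k]
  exact hmap_app g _ _ _

/-- Two sequences agreeing on a long prefix have outputs agreeing on a long prefix. -/
lemma hmap_congr {T : Transducer n} (g : Grow T) (m : ℕ) :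
    ∃ N, ∀ (q : T.Q) (y z : ℕ → A n), (∀ j < N, y j = z j) → ∀ l ≤ m,
      hmap T q y l = hmap T q z l := by
  obtain ⟨N, hN⟩ := g (m + 1)
  refine ⟨N, fun q y z h l hl => ?_⟩
  have e : pre y N = pre z N := by
    simp only [pre, List.map_inj_left, List.mem_range]; exact h
  have h1 := hN (pre y N) q (by simp)
  rw [hmap_get (k := N) (by omega) default, e, hmap_get (k := N) (by rw [← e]; omega) default]

/-- By pigeonhole, a word with more letters than `T` has states contains a circuit, so
nonempty circuits force growth. -/
lemma grow_of_circuits {T : Transducer n} (h : CircuitsNonempty T) : Grow T := by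
  have one : ∀ (w : Word n) (q : T.Q), Nat.card T.Q ≤ w.length → 1 ≤ (outs T w q).length := by
    intro w q hw
    have hfin : Fintype T.Q := Fintype.ofFinite _
    have hni : ¬ Function.Injective
        (fun j : Fin (w.length + 1) => dsts T (w.take j) q) := by
      intro hi
      have := Fintype.card_le_of_injective _ hi
      rw [Fintype.card_fin, ← Nat.card_eq_fintype_card] at this
      omega
    have : ∃ i j : Fin (w.length + 1), i < j ∧ dsts T (w.take i) q = dsts T (w.take j) q := by
      simp only [Function.Injective, not_forall] at hni
      obtain ⟨i, j, hij, hne⟩ := hni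
      rcases lt_or_gt_of_ne hne with h | h
      · exact ⟨i, j, h, hij⟩
      · exact ⟨j, i, h, hij.symm⟩
    obtain ⟨i, j, hij, e⟩ := this
    have hd : w.take j = w.take i ++ (w.take j).drop i := by
      conv_lhs => rw [← List.take_append_drop i (w.take j)]
      rw [List.take_take, min_eq_left (by exact_mod_cast hij.le)]
    have h1 := h (dsts T (w.take i) q) ((w.take j).drop i)
      (by
        rw [← List.length_pos_iff]
        simp only [List.length_drop, List.length_take]
        have := i.2; have := j.2
        have : (i : ℕ) < j := hij
        omega)
      (by rw [← dsts_append, ← hd, e])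
    have h2 : outs T w q = outs T (w.take i) q ++ outs T ((w.take j).drop i)
        (dsts T (w.take i) q) ++ outs T (w.drop j) (dsts T (w.take j) q) := by
      rw [← outs_append, ← hd, ← outs_append, List.take_append_drop]
    rw [h2]
    have := List.length_pos_iff.2 h1
    simp only [List.length_append]; omega
  intro m
  induction m with
  | zero => exact ⟨0, fun _ _ _ => Nat.zero_le _⟩
  | succ m ih =>
    obtain ⟨N, hN⟩ := ih
    refine ⟨N + Nat.card T.Q, fun w q hw => ?_⟩
    have h1 := hN (w.take N) q (by simp; omega)
    have h2 := one (w.drop N) (dsts T (w.take N) q) (by simp; omega)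
    rw [← List.take_append_drop N w, outs_append, List.length_append]
    omega

lemma exists_bound {Q : Type} [Finite Q] (γ : Q → ℤ) : ∃ C : ℕ, ∀ q, -(C : ℤ) ≤ γ q ∧ γ q ≤ C := by
  obtain ⟨C, hC⟩ := (Set.finite_range fun q => (γ q).natAbs).bddAbove
  refine ⟨C, fun q => ?_⟩
  have : (γ q).natAbs ≤ C := hC ⟨q, rfl⟩
  omega

lemma grow_of_ann {T : Transducer n} {γ : T.Q → ℤ} (h : Annotation T γ) : Grow T := by
  obtain ⟨C, hC⟩ := exists_bound γ
  intro m
  refine ⟨m + 2 * C, fun w q hw => ?_⟩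
  have h1 := h q w
  have h2 := hC q
  have h3 := hC (dsts T w q)
  omega

lemma circuits_of_ann {T : Transducer n} {γ : T.Q → ℤ} (h : Annotation T γ) :
    CircuitsNonempty T := by
  intro q w hw e
  have h1 := h q w
  rw [e] at h1
  have := List.length_pos_iff.2 hw
  rw [← List.length_pos_iff]
  omega

lemma sl3_of_ann {T : Transducer n} {γ : T.Q → ℤ} (h : Annotation T γ) : SL3 T := by
  intro q w e
  have h1 := h q w
  rw [e] at h1
  omega

/-! ### Synchronization and runs along bi-infinite sequences -/

lemma SyncAt.of_le {T : Transducer n} {k : ℕ} (h : SyncAt T k) {w : Word n} (hw : k ≤ w.length)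
    (p q : T.Q) : dsts T w p = dsts T w q := by
  have e : w = w.take k ++ w.drop k := (List.take_append_drop k w).symm
  rw [e, dsts_append, dsts_append, h (w.take k) (by simp; omega) p q]

lemma SyncAt.mono {T : Transducer n} {k l : ℕ} (h : SyncAt T k) (hkl : k ≤ l) : SyncAt T l :=
  fun _ hw => h.of_le (by omega)

lemma CoreState.dsts {T : Transducer n} {q : T.Q} (h : CoreState T q) (v : Word n) :
    CoreState T (dsts T v q) := by
  obtain ⟨k, w, hk, hw, h⟩ := h
  exact ⟨k + v.length, w ++ v, hk.mono (by omega), by simp [hw],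
    fun p => by rw [dsts_append, h]⟩

/-- `s` is the bi-infinite sequence of states visited by `T` while reading `x`. -/
def Run (T : Transducer n) (x : FullShift n) (s : ℤ → T.Q) : Prop :=
  ∀ i, s (i + 1) = T.tr (x i) (s i)

lemma Run.dsts {T : Transducer n} {x : FullShift n} {s : ℤ → T.Q} (h : Run T x s) (i : ℤ)
    (k : ℕ) : s (i + k) = dsts T (pre (tail x i) k) (s i) := by
  induction k with
  | zero => simp [pre, ShiftPaper.dsts]
  | succ k ih =>
    rw [pre_add, dsts_append, ← ih]
    have : i + ((k + 1 : ℕ) : ℤ) = i + k + 1 := by push_cast; ring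
    rw [this, h]
    simp [pre, drp, tail, ShiftPaper.dsts]

lemma window_eq (x : FullShift n) (i : ℤ) (k : ℕ) : window x i k = pre (tail x (i - k)) k := by
  simp only [window, pre, List.bind_eq_flatMap, List.pure_def, ← List.map_eq_flatMap,
    List.map_map]
  rfl

lemma window_length (x : FullShift n) (i : ℤ) (k : ℕ) : (window x i k).length = k := by
  rw [window_eq, pre_length]

lemma run_forced {T : Transducer n} {k : ℕ} (h : SyncAt T k) (x : FullShift n) :
    Run T x (forced T k x) := by
  intro i
  have h1 : pre (tail x (i - k)) (k + 1) = window x i k ++ [x i] := by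
    rw [pre_add, ← window_eq]; simp [pre, drp, tail]
  have h2 : pre (tail x (i - k)) (1 + k) = [x (i - k)] ++ window x (i + 1) k := by
    rw [pre_add, window_eq, drp_tail]
    have : i - (k : ℤ) + ((1 : ℕ) : ℤ) = i + 1 - k := by push_cast; ring
    rw [this]; simp [pre, tail]
  have h3 : T.tr (x i) (forced T k x i) = dsts T (window x i k ++ [x i]) (Classical.choice T.ne) := by
    rw [dsts_append]; rfl
  rw [h3, ← h1, add_comm k 1, h2, dsts_append]
  exact h _ (window_length _ _ _) _ _

lemma Run.eq_forced {T : Transducer n} {k : ℕ} (h : SyncAt T k) {x : FullShift n} {s : ℤ → T.Q}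
    (hs : Run T x s) (i : ℤ) : s i = forced T k x i := by
  have := hs.dsts (i - k) k
  rw [sub_add_cancel] at this
  rw [this, forced, window_eq]
  exact h _ (pre_length _ _) _ _

/-- Runs of a strongly synchronizing transducer depend only on the strict past. -/
lemma run_congr {T : Transducer n} (h : StronglySync T) {x y : FullShift n} {s t : ℤ → T.Q}
    (hs : Run T x s) (ht : Run T y t) {i : ℤ} (hxy : ∀ j < i, x j = y j) : s i = t i := by
  obtain ⟨k, h⟩ := h
  rw [hs.eq_forced h, ht.eq_forced h]
  have : window x i k = window y i k := by
    simp only [window_eq, pre, tail, List.map_inj_left, List.mem_range]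
    intro j hj
    apply hxy; omega
  simp only [forced, this]

lemma run_unique {T : Transducer n} (h : StronglySync T) {x : FullShift n} {s t : ℤ → T.Q}
    (hs : Run T x s) (ht : Run T x t) : s = t :=
  funext fun _ => run_congr h hs ht fun _ _ => rfl

lemma run_exists {T : Transducer n} (h : StronglySync T) (x : FullShift n) : ∃ s, Run T x s :=
  ⟨_, run_forced h.choose_spec x⟩

/-- `T` with the annotation `γ` induces the map `f`: the state `s i` active at index `i` writes its
output from position `i + γ (s i)` on. -/
structure Ann (T : Transducer n) (γ : T.Q → ℤ) (f : FullShift n → FullShift n) : Prop where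
  ss : StronglySync T
  core : IsCore T
  ann : Annotation T γ
  ind : ∀ x s, Run T x s → ∀ i, tail (f x) (i + γ (s i)) = hmap T (s i) (tail x i)

namespace Ann
variable {T U : Transducer n} {γ : T.Q → ℤ} {δ : U.Q → ℤ} {f g : FullShift n → FullShift n}

lemma grow (h : Ann T γ f) : Grow T := grow_of_ann h.ann

lemma ext (h : Ann T γ f) (h' : Ann T γ g) : f = g := by
  funext x j
  obtain ⟨s, hs⟩ := run_exists h.ss x
  obtain ⟨C, hC⟩ := exists_bound γ
  have e := (h.ind x s hs (j - C)).trans (h'.ind x s hs (j - C)).symm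
  have := congrFun e (C - γ (s (j - C))).toNat
  have hb := hC (s (j - C))
  simp only [tail] at this
  rwa [show j - ↑C + γ (s (j - ↑C)) + ↑(C - γ (s (j - C))).toNat = j by omega] at this

/-- Coordinates of the image to the left of `i + γ (s i)` depend only on the past of `i`. -/
lemma left_det (h : Ann T γ f) {x y : FullShift n} {s : ℤ → T.Q} (hs : Run T x s) {i : ℤ}
    (hxy : ∀ j < i, x j = y j) {j : ℤ} (hj : j < i + γ (s i)) : f x j = f y j := by
  obtain ⟨t, ht⟩ := run_exists h.ss y
  obtain ⟨C, hC⟩ := exists_bound γ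
  -- far enough to the left that the block starting at index `i - K` begins before `j`
  obtain ⟨K, hK⟩ : ∃ K : ℕ, i - K + C ≤ j := ⟨(i + C - j).toNat, by omega⟩
  have hst : s (i - K) = t (i - K) := run_congr h.ss hs ht fun j hj => hxy j (by omega)
  have hb := hC (s (i - K))
  have e1 := congrFun (h.ind x s hs (i - K)) (j - (i - K) - γ (s (i - K))).toNat
  have e2 := congrFun (h.ind y t ht (i - K)) (j - (i - K) - γ (s (i - K))).toNat
  rw [← hst] at e2
  have hpre : pre (tail x (i - K)) K = pre (tail y (i - K)) K := by
    simp only [pre, List.map_inj_left, List.mem_range, tail]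
    intro l hl; apply hxy; omega
  have hlen := h.ann (s (i - K)) (pre (tail x (i - K)) K)
  rw [← hs.dsts, sub_add_cancel, pre_length] at hlen
  rw [hmap_split h.grow _ _ K, app_lt _ _ (by omega) default] at e1
  rw [hmap_split h.grow _ _ K, ← hpre, app_lt _ _ (by omega) default, ← e1] at e2
  simp only [tail] at e2
  rw [show i - ↑K + γ (s (i - ↑K)) + ↑(j - (i - ↑K) - γ (s (i - ↑K))).toNat = j by omega] at e2
  exact e2.symm

end Ann

/-- The bi-infinite sequence with left half taken from `x` and right half `y`. -/
def glue (x : FullShift n) (y : ℕ → A n) : FullShift n := fun j => if 0 ≤ j then y j.toNat else x j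

lemma glue_neg (x : FullShift n) (y : ℕ → A n) {j : ℤ} (h : j < 0) : glue x y j = x j := by
  simp [glue, not_le.2 h]

lemma tail_glue (x : FullShift n) (y : ℕ → A n) : tail (glue x y) 0 = y := by
  funext j; simp [tail, glue]

lemma glue_tail (x : FullShift n) : glue x (tail x 0) = x := by
  funext j
  by_cases h : 0 ≤ j
  · simp [glue, tail, h]
  · simp [glue, h]

/-- Each core state is forced by some past. -/
lemma exists_past {T : Transducer n} {q : T.Q} (h : CoreState T q) :
    ∃ x : FullShift n, ∀ (z : FullShift n) (s : ℤ → T.Q), (∀ j < 0, z j = x j) → Run T z s →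
      s 0 = q := by
  obtain ⟨k, w, hk, hw, h⟩ := h
  refine ⟨fun j => w.getD (j + k).toNat default, fun z s hz hs => ?_⟩
  rw [hs.eq_forced hk, ← h (Classical.choice T.ne), forced]
  congr 1
  apply List.ext_getElem (by simp [window_length, hw])
  intro i h1 h2
  simp only [window_eq, pre, tail, List.getElem_map, List.getElem_range]
  have hi : 0 - (k : ℤ) + (i : ℤ) + k = (i : ℤ) := by ring
  have hik : i < k := by simpa [window_length] using h1
  rw [hz _ (by omega)]
  beta_reduce
  rw [hi, Int.toNat_natCast, List.getD_eq_getElem _ _ h2]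

/-- Along a common run, the annotation at `0` of a transducer with complete response is the first
coordinate that is not determined by the past. -/
lemma Ann.le {T U : Transducer n} {γ : T.Q → ℤ} {δ : U.Q → ℤ} {f : FullShift n → FullShift n}
    (hT : Ann T γ f) (hU : Ann U δ f) (hN : NoIncomplete U) {x : FullShift n} {s : ℤ → T.Q}
    {t : ℤ → U.Q} (hs : Run T x s) (ht : Run U x t) : γ (s 0) ≤ δ (t 0) := by
  by_contra hlt
  push Not at hlt
  obtain ⟨y, y', hy⟩ := hN (t 0)
  have key : ∀ z, hmap U (t 0) z 0 = f x (δ (t 0)) := by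
    intro z
    obtain ⟨t', ht'⟩ := run_exists hU.ss (glue x z)
    have e0 : t 0 = t' 0 := run_congr hU.ss ht ht' fun j hj => (glue_neg x z hj).symm
    have e1 := congrFun (hU.ind _ t' ht' 0) 0
    rw [tail_glue, ← e0] at e1
    rw [← e1]
    simp only [tail, zero_add, Nat.cast_zero, add_zero]
    exact (hT.left_det hs (i := 0) (fun j hj => (glue_neg x z hj).symm) (by omega)).symm
  exact hy ((key y).trans (key y').symm)

/-- Annotated transducers with complete response inducing the same map have the same states. -/
lemma Ann.exists_match {T U : Transducer n} {γ : T.Q → ℤ} {δ : U.Q → ℤ} {f : FullShift n → FullShift n}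
    (hT : Ann T γ f) (hU : Ann U δ f) (hNT : NoIncomplete T) (hNU : NoIncomplete U) (q : T.Q) :
    ∃ u, hmap T q = hmap U u ∧ δ u = γ q := by
  obtain ⟨x, hx⟩ := exists_past (hT.core q)
  obtain ⟨s, hs⟩ := run_exists hT.ss x
  obtain ⟨t, ht⟩ := run_exists hU.ss x
  have hq := hx x s (fun _ _ => rfl) hs
  have e := le_antisymm (hT.le hU hNU hs ht) (hU.le hT hNT ht hs)
  rw [hq] at e
  refine ⟨t 0, funext fun y => ?_, e.symm⟩
  obtain ⟨s', hs'⟩ := run_exists hT.ss (glue x y)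
  obtain ⟨t', ht'⟩ := run_exists hU.ss (glue x y)
  have e1 := hT.ind _ s' hs' 0
  have e2 := hU.ind _ t' ht' 0
  rw [hx _ s' (fun j hj => glue_neg x y hj) hs', tail_glue] at e1
  rw [← run_congr hU.ss ht ht' fun j hj => (glue_neg x y hj).symm, tail_glue, ← e] at e2
  exact e1.symm.trans e2

/-! ### Comparing ω-equivalent states -/

lemma hmap_eq_of_outs {T U : Transducer n} {p : T.Q} {q : U.Q}
    (h : ∀ w, outs T w p = outs U w q) : hmap T p = hmap U q := by
  funext x m
  have e : (fun w => outs T w p) = fun w => outs U w q := funext h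
  classical
  exact congrArg (fun o : Word n → Word n =>
    if h : ∃ k, m < (o ((List.range k).map x)).length then
      (o ((List.range h.choose).map x)).getD m default
    else default) e

lemma outs_length_le {T U : Transducer n} (gT : Grow T) (gU : Grow U) (hU : NoIncomplete U)
    {p : T.Q} {q : U.Q} (h : hmap T p = hmap U q) (w : Word n) :
    (outs T w p).length ≤ (outs U w q).length := by
  by_contra hlt
  push Not at hlt
  obtain ⟨y, y', hy⟩ := hU (dsts U w q)
  apply hy
  have key : ∀ z, hmap U (dsts U w q) z 0 = (outs T w p).getD (outs U w q).length default := by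
    intro z
    have e := congrFun (congrFun h (app w z)) (outs U w q).length
    rw [hmap_app gT, hmap_app gU, app_lt _ _ hlt default] at e
    rw [e, app_ge' _ _ le_rfl, Nat.sub_self]
  rw [key, key]

lemma dsts_outs_of_length_eq {T U : Transducer n} (gT : Grow T) (gU : Grow U)
    {p : T.Q} {q : U.Q} (h : hmap T p = hmap U q) {w : Word n}
    (hl : (outs T w p).length = (outs U w q).length) :
    outs T w p = outs U w q ∧ hmap T (dsts T w p) = hmap U (dsts U w q) := by
  have e : ∀ y, app (outs T w p) (hmap T (dsts T w p) y)
      = app (outs U w q) (hmap U (dsts U w q) y) := fun y => by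
    rw [← hmap_app gT, ← hmap_app gU, h]
  have e1 : outs T w p = outs U w q := by
    rw [app_pre_eq_of_eq (e fun _ => default), hl, pre_app]
  refine ⟨e1, funext fun y => ?_⟩
  have := e y
  rw [e1] at this
  exact app_injective _ this

/-- In the absence of incomplete response, the output along a word is determined by `hmap`. -/
lemma dsts_outs_of_noIncomplete {T U : Transducer n} (gT : Grow T) (gU : Grow U)
    (hT : NoIncomplete T) (hU : NoIncomplete U) {p : T.Q} {q : U.Q} (h : hmap T p = hmap U q)
    (w : Word n) : outs T w p = outs U w q ∧ hmap T (dsts T w p) = hmap U (dsts U w q) :=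
  dsts_outs_of_length_eq gT gU h
    (le_antisymm (outs_length_le gT gU hU h w) (outs_length_le gU gT hT h.symm w))

/-- ω-equivalent states write equally many letters; this makes `quotT` well behaved. -/
def Compat (T : Transducer n) : Prop :=
  ∀ p q, hmap T p = hmap T q → ∀ a, (T.out a p).length = (T.out a q).length

lemma compat_of_noIncomplete {T : Transducer n} (g : Grow T) (h : NoIncomplete T) : Compat T := by
  intro p q e a
  rw [← outs_singleton, ← outs_singleton, (dsts_outs_of_noIncomplete g g h h e [a]).1]

lemma compat_of_synchronous {T : Transducer n} (h : Synchronous T) : Compat T :=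
  fun p q _ a => (h a p).trans (h a q).symm

/-! ### Identifying ω-equivalent states -/

/-- The ω-equivalence class of a state. -/
def qmk (T : Transducer n) (q : T.Q) : (quotT T).Q := Quotient.mk (omegaSetoid T) q

/-- The representative of an ω-equivalence class used by `quotT`. -/
noncomputable def qout (T : Transducer n) (c : (quotT T).Q) : T.Q := Quotient.out c

lemma hmap_out (T : Transducer n) (q : T.Q) : hmap T (qout T (qmk T q)) = hmap T q :=
  Quotient.mk_out (s := omegaSetoid T) q

lemma qmk_out (T : Transducer n) (c : (quotT T).Q) : qmk T (qout T c) = c :=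
  Quotient.out_eq c

section
variable {T : Transducer n} (g : Grow T) (hc : Compat T)
include g hc

lemma quot_out (a : A n) (q : T.Q) : (quotT T).out a (qmk T q) = T.out a q := by
  have := (dsts_outs_of_length_eq g g (hmap_out T q) (w := [a])
    (by simpa [outs] using hc _ _ (hmap_out T q) a)).1
  rw [outs_singleton, outs_singleton] at this
  exact this

lemma quot_tr (a : A n) (q : T.Q) : (quotT T).tr a (qmk T q) = qmk T (T.tr a q) := by
  have := (dsts_outs_of_length_eq g g (hmap_out T q) (w := [a])
    (by simpa [outs] using hc _ _ (hmap_out T q) a)).2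
  exact Quotient.sound (s := omegaSetoid T) this

lemma quot_dsts (w : Word n) (q : T.Q) : dsts (quotT T) w (qmk T q) = qmk T (dsts T w q) := by
  induction w generalizing q with
  | nil => rfl
  | cons a w ih => simp only [dsts, quot_tr g hc, ih]

lemma quot_outs (w : Word n) (q : T.Q) : outs (quotT T) w (qmk T q) = outs T w q := by
  induction w generalizing q with
  | nil => rfl
  | cons a w ih => simp only [outs, quot_tr g hc, quot_out g hc, ih]

lemma quot_hmap (q : T.Q) : hmap (quotT T) (qmk T q) = hmap T q :=
  hmap_eq_of_outs fun w => quot_outs g hc w q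

lemma quot_weaklyMinimal : WeaklyMinimal (quotT T) := by
  intro c d h
  rw [← qmk_out T c, ← qmk_out T d, quot_hmap g hc, quot_hmap g hc] at h
  rw [← qmk_out T c, ← qmk_out T d]
  exact Quotient.sound (s := omegaSetoid T) h

lemma quot_noIncomplete (h : NoIncomplete T) : NoIncomplete (quotT T) := by
  intro c
  rw [← qmk_out T c]
  obtain ⟨x, y, hxy⟩ := h (qout T c)
  exact ⟨x, y, by rwa [quot_hmap g hc]⟩

lemma quot_syncAt {k : ℕ} (h : SyncAt T k) : SyncAt (quotT T) k := by
  intro w hw c d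
  rw [← qmk_out T c, ← qmk_out T d, quot_dsts g hc, quot_dsts g hc, h w hw]

lemma quot_isCore (h : IsCore T) : IsCore (quotT T) := by
  intro c
  obtain ⟨k, w, hk, hw, hq⟩ := h (qout T c)
  refine ⟨k, w, quot_syncAt g hc hk, hw, fun d => ?_⟩
  rw [← qmk_out T d, quot_dsts g hc, hq, qmk_out]

lemma quot_run {x : FullShift n} {s : ℤ → T.Q} (h : Run T x s) :
    Run (quotT T) x fun i => qmk T (s i) := by
  intro i
  simp only [quot_tr g hc, h i]

end

lemma Ann.quot {T : Transducer n} {γ : T.Q → ℤ} {f : FullShift n → FullShift n}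
    (h : Ann T γ f) (hc : Compat T) (hγ : ∀ p q, hmap T p = hmap T q → γ p = γ q) :
    Ann (quotT T) (fun c => γ (qout T c)) f where
  ss := h.ss.imp fun _ => quot_syncAt h.grow hc
  core := quot_isCore h.grow hc h.core
  ann := by
    intro c w
    have e := h.ann (qout T c) w
    beta_reduce
    conv_lhs => rw [← qmk_out T c]
    conv_rhs => enter [1, 2]; rw [← qmk_out T c]
    rw [quot_dsts h.grow hc, quot_outs h.grow hc,
      hγ _ _ (hmap_out T _), e]
  ind := by
    intro x s hs i
    obtain ⟨t, ht⟩ := run_exists h.ss x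
    have e := run_unique (h.ss.imp fun _ => quot_syncAt h.grow hc) hs (quot_run h.grow hc ht)
    subst e
    simp only [quot_hmap h.grow hc]
    rw [hγ _ _ (hmap_out T _)]
    exact h.ind x t ht i

/-! ### Passing to the core -/

section
variable {T : Transducer n} (h : StronglySync T)
include h

lemma exists_coreState : ∃ q, CoreState T q := by
  obtain ⟨k, hk⟩ := h
  exact ⟨dsts T (List.replicate k default) (Classical.choice T.ne), k, List.replicate k default,
    hk, by simp, fun p => hk _ (by simp) _ _⟩

lemma coreStateE_iff (q : T.Q) : CoreStateE T q ↔ CoreState T q := by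
  obtain ⟨p, hp⟩ := exists_coreState h
  exact ⟨fun hq => hq.resolve_right fun hn => hn p hp, Or.inl⟩

/-- The inclusion of the states of the core. -/
def cval (T : Transducer n) (q : (coreT T).Q) : T.Q := Subtype.val q

omit h in
lemma cval_injective (T : Transducer n) : Function.Injective (cval T) := Subtype.val_injective

lemma core_tr (a : A n) (q : (coreT T).Q) : cval T ((coreT T).tr a q) = T.tr a (cval T q) := by
  have hq : CoreStateE T (T.tr a q.1) :=
    Or.inl (((coreStateE_iff h q.1).1 q.2).dsts [a])
  exact congrArg Subtype.val (dif_pos hq)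

lemma core_dsts (w : Word n) (q : (coreT T).Q) : cval T (dsts (coreT T) w q) = dsts T w (cval T q) := by
  induction w generalizing q with
  | nil => rfl
  | cons a w ih => simp only [dsts, ih, core_tr h]

lemma core_outs (w : Word n) (q : (coreT T).Q) : outs (coreT T) w q = outs T w (cval T q) := by
  induction w generalizing q with
  | nil => rfl
  | cons a w ih => simp only [outs, ih, core_tr h]; rfl

lemma core_hmap (q : (coreT T).Q) : hmap (coreT T) q = hmap T (cval T q) :=
  hmap_eq_of_outs fun w => core_outs h w q

lemma core_syncAt {k : ℕ} (hk : SyncAt T k) : SyncAt (coreT T) k := fun w hw p q =>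
  cval_injective T (by rw [core_dsts h, core_dsts h, hk w hw])

lemma core_ss : StronglySync (coreT T) := h.imp fun _ => core_syncAt h

lemma core_isCore : IsCore (coreT T) := by
  intro q
  obtain ⟨k, w, hk, hw, hq⟩ := (coreStateE_iff h q.1).1 q.2
  exact ⟨k, w, core_syncAt h hk, hw, fun p => cval_injective T (by rw [core_dsts h, hq]; rfl)⟩

lemma core_grow (g : Grow T) : Grow (coreT T) := by
  intro m
  obtain ⟨N, hN⟩ := g m
  exact ⟨N, fun w q hw => by rw [core_outs h]; exact hN w _ hw⟩

lemma core_noIncomplete (hn : NoIncomplete T) : NoIncomplete (coreT T) := by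
  intro q
  obtain ⟨x, y, hxy⟩ := hn (cval T q)
  exact ⟨x, y, by rwa [core_hmap h]⟩

end

lemma Ann.ofCore {T : Transducer n} {γ : T.Q → ℤ} {f : FullShift n → FullShift n}
    (h : StronglySync T) (ha : Annotation T γ)
    (hi : ∀ x s, Run T x s → ∀ i, tail (f x) (i + γ (s i)) = hmap T (s i) (tail x i)) :
    Ann (coreT T) (fun q => γ (cval T q)) f where
  ss := core_ss h
  core := core_isCore h
  ann := fun q w => by
    beta_reduce
    rw [core_dsts h, core_outs h]; exact ha _ w
  ind := fun x s hs i => by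
    rw [core_hmap h]
    exact hi x (fun i => cval T (s i)) (fun i => by simp only [hs i, core_tr h]) i

/-! ### Removing incomplete response -/

section
variable {T : Transducer n}

lemma extentWord_eq (T : Transducer n) (q : T.Q) :
    extentWord T q = pre (hmap T q fun _ => default) (extentLen T q) := rfl

lemma disagree_extentLen {q : T.Q} (h : FiniteExtent T q) : Disagree T q (extentLen T q) := by
  classical
  simp only [extentLen]
  rw [dif_pos h]
  exact Nat.find_spec h

lemma extentLen_le {q : T.Q} {j : ℕ} (h : Disagree T q j) : extentLen T q ≤ j := by
  classical
  simp only [extentLen]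
  rw [dif_pos ⟨j, h⟩]
  exact Nat.find_min' _ h

lemma hmap_eq_of_lt {q : T.Q} {j : ℕ} (h : j < extentLen T q) (x y : ℕ → A n) :
    hmap T q x j = hmap T q y j := by
  by_contra hne
  exact absurd (extentLen_le ⟨x, y, hne⟩) (by omega)

/-- The identity map, viewing a state of `removeIncomplete T` as a state of `T`. -/
def rval (T : Transducer n) (q : (removeIncomplete T).Q) : T.Q := q

variable (g : Grow T)
include g

lemma extentLen_le_add (w : Word n) (q : T.Q) (hf : FiniteExtent T (dsts T w q)) :
    extentLen T q ≤ (outs T w q).length + extentLen T (dsts T w q) := by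
  obtain ⟨x, y, hxy⟩ := disagree_extentLen hf
  refine extentLen_le ⟨app w x, app w y, ?_⟩
  rwa [hmap_app g, hmap_app g, app_ge, app_ge]

lemma outs_append_extentWord (w : Word n) (q : T.Q) :
    outs T w q ++ extentWord T (dsts T w q) = pre (hmap T q (app w fun _ => default))
      ((outs T w q).length + extentLen T (dsts T w q)) := by
  rw [hmap_app g, pre_app_add, extentWord_eq]

lemma extentWord_append_drop (w : Word n) (q : T.Q) (hf : FiniteExtent T (dsts T w q)) :
    extentWord T q ++ (outs T w q ++ extentWord T (dsts T w q)).drop (extentLen T q)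
      = outs T w q ++ extentWord T (dsts T w q) := by
  have e : extentWord T q = (outs T w q ++ extentWord T (dsts T w q)).take (extentLen T q) := by
    rw [outs_append_extentWord g]
    obtain ⟨d, hd⟩ := Nat.exists_eq_add_of_le (extentLen_le_add g w q hf)
    rw [hd, pre_add, List.take_append_of_le_length (by simp), List.take_of_length_le (by simp),
      extentWord_eq]
    simp only [pre, List.map_inj_left, List.mem_range]
    exact fun i hi => hmap_eq_of_lt hi _ _
  conv_lhs => rw [e]
  exact List.take_append_drop _ _

variable (hf : ∀ p : T.Q, FiniteExtent T p)
include hf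

omit g in
lemma rem_out (a : A n) (q : (removeIncomplete T).Q) : (removeIncomplete T).out a q
    = (T.out a (rval T q) ++ extentWord T (T.tr a (rval T q))).drop (extentLen T (rval T q)) :=
  if_pos hf

omit g hf in
lemma rem_dsts (w : Word n) (q : (removeIncomplete T).Q) :
    rval T (dsts (removeIncomplete T) w q) = dsts T w (rval T q) := by
  induction w generalizing q with
  | nil => rfl
  | cons a w ih => exact ih _

lemma rem_outs (w : Word n) (q : (removeIncomplete T).Q) : outs (removeIncomplete T) w q
    = (outs T w (rval T q) ++ extentWord T (dsts T w (rval T q))).drop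
      (extentLen T (rval T q)) := by
  induction w generalizing q with
  | nil => simp [outs, dsts, extentWord_eq]
  | cons a w ih =>
    have h2 : rval T ((removeIncomplete T).tr a q) = T.tr a (rval T q) := rfl
    have hle := extentLen_le_add g [a] (rval T q) (hf _)
    rw [outs_singleton] at hle
    rw [outs, ih, rem_out hf, h2, ← List.drop_append_of_le_length, List.append_assoc,
      extentWord_append_drop g w _ (hf _)]
    · simp [outs, dsts]
    · rw [List.length_append, extentWord_eq, pre_length]; exact hle

lemma rem_outs_length (w : Word n) (q : (removeIncomplete T).Q) :
    (outs (removeIncomplete T) w q).length + extentLen T (rval T q)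
      = (outs T w (rval T q)).length + extentLen T (dsts T w (rval T q)) := by
  have := extentLen_le_add g w (rval T q) (hf _)
  rw [rem_outs g hf, List.length_drop, List.length_append, extentWord_eq, pre_length]
  omega

lemma rem_grow : Grow (removeIncomplete T) := by
  obtain ⟨C, hC⟩ := exists_bound (fun q => (extentLen T q : ℤ))
  intro m
  obtain ⟨N, hN⟩ := g (m + C)
  refine ⟨N, fun w q hw => ?_⟩
  have h1 := rem_outs_length g hf w q
  have h2 := hN w (rval T q) hw
  have h3 : (extentLen T (rval T q) : ℤ) ≤ C := (hC _).2
  omega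

lemma rem_hmap (q : (removeIncomplete T).Q) (x : ℕ → A n) :
    hmap (removeIncomplete T) q x = drp (hmap T (rval T q) x) (extentLen T (rval T q)) := by
  funext m
  obtain ⟨N, hN⟩ := g (extentLen T (rval T q) + m + 1)
  have h1 := hN (pre x N) (rval T q) (by simp)
  have h2 := rem_outs_length g hf (pre x N) q
  rw [hmap_get (k := N) (by omega) default, rem_outs g hf, drp,
    hmap_get (k := N) (by omega) default]
  rw [List.getD_eq_getElem?_getD, List.getD_eq_getElem?_getD, List.getElem?_drop,
    List.getElem?_append_left (by omega)]

lemma rem_noIncomplete : NoIncomplete (removeIncomplete T) := by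
  intro q
  obtain ⟨x, y, hxy⟩ := disagree_extentLen (hf (rval T q))
  exact ⟨x, y, by rwa [rem_hmap g hf, rem_hmap g hf]⟩

omit g hf in
lemma rem_syncAt {k : ℕ} (h : SyncAt T k) : SyncAt (removeIncomplete T) k := by
  intro w hw p q
  exact (rem_dsts w p).trans ((h w hw _ _).trans (rem_dsts w q).symm)

end

/-! ### Minimal representatives -/

/-- The annotation `q ↦ γ q + |Λ(ε, q)|` transported to the minimal representative. -/
noncomputable def annMin (T : Transducer n) (γ : T.Q → ℤ) : (minRep T).Q → ℤ := fun c =>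
  γ (Quotient.out c).1 + (extentLen T (Quotient.out c).1 : ℤ)

/-- The annotated transducer `p` induces `f` and is minimal, up to the degenerate case in which it
is some `Z_a`. -/
structure Rep (p : ASLPair n) (f : FullShift n → FullShift n) : Prop where
  ann : Ann p.1 p.2 f
  wm : WeaklyMinimal p.1
  dich : NoIncomplete p.1 ∨ ∃ a : A n, OmegaEq p.1 (Zword [a])

lemma gamma_eq {T : Transducer n} {γ : T.Q → ℤ} (hs : StronglySync T) (ha : Annotation T γ)
    (hn : NoIncomplete T) (p q : T.Q) (e : hmap T p = hmap T q) : γ p = γ q := by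
  obtain ⟨k, hk⟩ := hs
  have g := grow_of_ann ha
  have h1 := ha p (List.replicate k default)
  have h2 := ha q (List.replicate k default)
  rw [hk _ (by simp) p q, (dsts_outs_of_noIncomplete g g hn hn e _).1] at h1
  omega

lemma outs_of_outConst {T : Transducer n} {u : Word n} (h : ∀ a q, T.out a q = u) (w : Word n)
    (q : T.Q) : outs T w q = (List.replicate w.length u).flatten := by
  induction w generalizing q with
  | nil => rfl
  | cons a w ih => simp [outs, ih, h, List.replicate_succ]

lemma hmap_of_outConst {T : Transducer n} {a : A n} (h : ∀ b q, T.out b q = [a]) (q : T.Q)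
    (x : ℕ → A n) (j : ℕ) : hmap T q x j = a := by
  have e : outs T (pre x (j + 1)) q = List.replicate (j + 1) a := by
    rw [outs_of_outConst h, pre_length]; simp
  rw [hmap_get (k := j + 1) (by simp [e]) default, e]
  simp [List.getD_eq_getElem?_getD]

lemma hmap_Zword (a : A n) (q : (Zword [a]).Q) (x : ℕ → A n) (j : ℕ) :
    hmap (Zword [a]) q x j = a := hmap_of_outConst (fun _ _ => rfl) q x j

lemma hmap_of_omegaEq_Zword {T : Transducer n} {a : A n} (h : OmegaEq T (Zword [a])) (q : T.Q)
    (x : ℕ → A n) (j : ℕ) : hmap T q x j = a := by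
  obtain ⟨F, hF⟩ := h
  rw [hF, hmap_Zword]

lemma Ann.eq_const {T : Transducer n} {γ : T.Q → ℤ} {f : FullShift n → FullShift n}
    (h : Ann T γ f) {a : A n} (hqa : ∀ q x j, hmap T q x j = a) (x : FullShift n) (j : ℤ) :
    f x j = a := by
  obtain ⟨s, hs⟩ := run_exists h.ss x
  obtain ⟨C, hC⟩ := exists_bound γ
  have hb := hC (s (j - C))
  have e := congrFun (h.ind x s hs (j - C)) (C - γ (s (j - C))).toNat
  rw [hqa] at e
  simp only [tail] at e
  rwa [show j - ↑C + γ (s (j - ↑C)) + ↑(C - γ (s (j - C))).toNat = j by omega] at e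

/-- If some state has infinite incomplete response, the induced map is constant. -/
lemma Ann.degenerate {T : Transducer n} {γ : T.Q → ℤ} {f : FullShift n → FullShift n}
    (h : Ann T γ f) (hf : ¬ ∀ p, FiniteExtent T p) :
    ∃ a : A n, (∀ q x j, hmap T q x j = a) ∧ ∀ x j, f x j = a := by
  push Not at hf
  obtain ⟨q, hq⟩ := hf
  have hq' : ∀ x y, hmap T q x = hmap T q y := by
    intro x y; funext j
    by_contra hne
    exact hq ⟨j, x, y, hne⟩
  have hall : ∀ p x y, hmap T p x = hmap T p y := by
    intro p x y
    obtain ⟨k, w, hk, hw, hp⟩ := h.core p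
    have := hq' (app w x) (app w y)
    rw [hmap_app h.grow, hmap_app h.grow, hp] at this
    exact app_injective _ this
  -- a state `p` fixed by one letter, from which all outputs can be read off
  obtain ⟨k, hk⟩ := h.ss
  obtain ⟨p, hp⟩ : ∃ p, T.tr default p = p := by
    refine ⟨dsts T (List.replicate k default) q, ?_⟩
    have e : T.tr default (dsts T (List.replicate k default) q)
        = dsts T (List.replicate k default ++ [default]) q := by rw [dsts_append]; rfl
    rw [e, ← List.replicate_succ', List.replicate_succ]
    exact hk (List.replicate k default) List.length_replicate (T.tr default q) q
  obtain ⟨a, ha⟩ : ∃ a, T.out default p = [a] := by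
    rw [← List.length_eq_one_iff, ← outs_singleton]
    exact sl3_of_ann h.ann p [default] hp
  have hpa : ∀ j x, hmap T p x j = a := by
    intro j
    induction j with
    | zero =>
      intro x
      rw [hall p x (app [default] x), hmap_app h.grow, outs_singleton, ha,
        app_lt _ _ (Nat.zero_lt_one : 0 < [a].length) default]
      rfl
    | succ j ih =>
      intro x
      rw [hall p x (app [default] x), hmap_app h.grow, outs_singleton, ha, app_ge' _ _ (Nat.succ_pos j : [a].length ≤ j + 1)]
      change hmap T (T.tr default p) x j = a
      rw [hp]; exact ih x
  have hqa : ∀ q x j, hmap T q x j = a := by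
    intro q x j
    obtain ⟨k, w, hk, hw, hq⟩ := h.core q
    have := hpa ((outs T w p).length + j) (app w x)
    rwa [hmap_app h.grow, app_ge, hq] at this
  exact ⟨a, hqa, h.eq_const hqa⟩

lemma minimalRot_singleton (a : A n) : minimalRot [a] = [a] := by
  simp [minimalRot]

lemma periodicRoot_const {T : Transducer n} {a : A n} (h : ∀ q x j, hmap T q x j = a) :
    periodicRoot T = [a] := by
  classical
  have hp : ∃ m, 0 < m ∧ ∀ j, hmap T (Classical.choice T.ne) (fun _ => default) (j + m) =
        hmap T (Classical.choice T.ne) (fun _ => default) j := ⟨1, one_pos, fun j => by rw [h, h]⟩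
  have h1 : Nat.find hp = 1 := by
    rw [Nat.find_eq_iff]
    exact ⟨⟨one_pos, fun j => by rw [h, h]⟩, fun m hm h' => by omega⟩
  simp only [periodicRoot]
  rw [dif_pos hp, h1]
  simp [h]

/-- The minimal representative of an annotated transducer induces the same map. -/
theorem Ann.minRep {T : Transducer n} {γ : T.Q → ℤ} {f : FullShift n → FullShift n}
    (h : Ann T γ f) : Rep ⟨minRep T, annMin T γ⟩ f := by
  by_cases hf : ∀ p, FiniteExtent T p
  · have hss : StronglySync (removeIncomplete T) := h.ss.imp fun _ => rem_syncAt
    have h0 : Ann (coreT (removeIncomplete T))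
        (fun q => γ (rval T (cval _ q)) + (extentLen T (rval T (cval _ q)) : ℤ)) f := by
      refine Ann.ofCore (γ := fun q => γ (rval T q) + (extentLen T (rval T q) : ℤ)) hss ?_ ?_
      · intro q w
        have e1 := h.ann (rval T q) w
        have e2 := rem_outs_length h.grow hf w q
        simp only [rem_dsts]
        omega
      · intro x s hs i
        rw [rem_hmap h.grow hf, ← h.ind x (fun i => rval T (s i)) hs, drp_tail, add_assoc]
    have hn := core_noIncomplete hss (rem_noIncomplete h.grow hf)
    have hc := compat_of_noIncomplete h0.grow hn
    exact ⟨h0.quot hc (gamma_eq h0.ss h0.ann hn), quot_weaklyMinimal h0.grow hc,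
      Or.inl (quot_noIncomplete h0.grow hc hn)⟩
  · obtain ⟨a, ha, hfa⟩ := h.degenerate hf
    have hout : ∀ b q, (removeIncomplete T).out b q = [a] := by
      intro b q
      simp only [removeIncomplete]
      rw [if_neg hf, periodicRoot_const ha, minimalRot_singleton]
    have hout1 : ∀ b q, (coreT (removeIncomplete T)).out b q = [a] := fun b q => hout b q.1
    have hout2 : ∀ b q, (ShiftPaper.minRep T).out b q = [a] := fun b q => hout1 b _
    have hsub : Subsingleton (ShiftPaper.minRep T).Q := by
      refine ⟨fun c d => ?_⟩
      rw [← qmk_out _ c, ← qmk_out _ d]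
      refine Quotient.sound (s := omegaSetoid _) ?_
      change hmap _ _ = hmap _ _
      funext x j
      rw [hmap_of_outConst hout1, hmap_of_outConst hout1]
    have hsync : SyncAt (ShiftPaper.minRep T) 0 := fun w _ p q => Subsingleton.elim _ _
    refine ⟨⟨⟨0, hsync⟩, fun q => ⟨0, [], hsync, rfl, fun p => Subsingleton.elim _ _⟩, ?_, ?_⟩,
      fun p q _ => Subsingleton.elim _ _, Or.inr ⟨a, ?_⟩⟩
    · intro q w
      rw [Subsingleton.elim (dsts _ w q) q, outs_of_outConst hout2]
      simp
    · intro x s hs i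
      funext j
      simp only [tail, hfa]
      rw [hmap_of_outConst hout2]
    · refine ⟨⟨fun _ => PUnit.unit, fun _ => Classical.choice (ShiftPaper.minRep T).ne,
        fun _ => Subsingleton.elim _ _, fun _ => rfl⟩, fun q => ?_⟩
      funext x j
      rw [hmap_of_outConst hout2, hmap_Zword]

/-! ### Annotated minimal transducers correspond to the maps they induce -/

section
variable {p q : ASLPair n} {f g : FullShift n → FullShift n}

lemma Rep.not_const (h : Rep p f) (hn : NoIncomplete p.1) (a : A n) : ¬ ∀ x j, f x j = a := by
  intro hf
  obtain ⟨u⟩ := p.1.ne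
  obtain ⟨y, y', hy⟩ := hn u
  obtain ⟨x, hx⟩ := exists_past (h.ann.core u)
  have key : ∀ z, hmap p.1 u z 0 = a := by
    intro z
    obtain ⟨s, hs⟩ := run_exists h.ann.ss (glue x z)
    have e := h.ann.ind _ s hs 0
    rw [hx _ s (fun j hj => glue_neg x z hj) hs, tail_glue] at e
    rw [← e]
    exact hf _ _
  exact hy ((key y).trans (key y').symm)

lemma Rep.const (h : Rep p f) {a : A n} (ha : OmegaEq p.1 (Zword [a])) (x : FullShift n) (j : ℤ) :
    f x j = a :=
  h.ann.eq_const (hmap_of_omegaEq_Zword ha) x j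

theorem Rep.aslEq (hp : Rep p f) (hq : Rep q f) : ASLEq p q := by
  rcases hp.dich with hnp | ⟨a, ha⟩ <;> rcases hq.dich with hnq | ⟨b, hb⟩
  · left
    choose F hF using hp.ann.exists_match hq.ann hnp hnq
    choose G hG using hq.ann.exists_match hp.ann hnq hnp
    refine ⟨⟨F, G, fun s => ?_, fun s => ?_⟩, fun s => (hF s).1, fun s => (hF s).2⟩
    · exact hp.wm _ _ ((hF s).1.trans (hG _).1).symm
    · exact hq.wm _ _ ((hG s).1.trans (hF _).1).symm
  · exact absurd (hq.const hb) (hp.not_const hnp b)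
  · exact absurd (hp.const ha) (hq.not_const hnq a)
  · right
    have e : a = b := by
      rw [← hp.const ha (fun _ => default) 0, hq.const hb]
    exact ⟨a, ha, e ▸ hb⟩

theorem Rep.eq_of_aslEq (hp : Rep p f) (hq : Rep q g) (h : ASLEq p q) : f = g := by
  rcases h with ⟨F, hF, hγ⟩ | ⟨a, ha, hb⟩
  · rcases hp.dich with hnp | ⟨a, ha⟩
    · have hnq : NoIncomplete q.1 := by
        intro u
        obtain ⟨x, y, hxy⟩ := hnp (F.symm u)
        refine ⟨x, y, ?_⟩
        rwa [hF, F.apply_symm_apply] at hxy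
      refine hp.ann.ext ⟨hp.ann.ss, hp.ann.core, hp.ann.ann, fun x s hs i => ?_⟩
      have hr : Run q.1 x fun i => F (s i) := by
        intro i
        apply hq.wm
        have e := (dsts_outs_of_noIncomplete hp.ann.grow hq.ann.grow hnp hnq
          (hF (s i)) [x i]).2
        beta_reduce
        rw [← hF, hs i]
        exact e
      rw [← hγ, hF]
      exact hq.ann.ind x _ hr i
    · have hb : OmegaEq q.1 (Zword [a]) := by
        obtain ⟨G, hG⟩ := ha
        exact ⟨F.symm.trans G, fun u => by
          rw [Equiv.trans_apply, ← hG, hF, F.apply_symm_apply]⟩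
      funext x j
      rw [hp.const ha, hq.const hb]
  · funext x j
    rw [hp.const ha, hq.const hb]

lemma isPrime_singleton (a : A n) : IsPrime [a] := by
  refine ⟨by simp, fun u k h => ?_⟩
  rcases u with _ | ⟨b, u⟩
  · simp at h
  · simp

lemma Rep.mnMem (h : Rep p f) : MnMem p.1 :=
  ⟨circuits_of_ann h.ann.ann, h.ann.ss, h.ann.core, h.dich.imp (fun hn => ⟨hn, h.wm⟩)
    fun ⟨a, ha⟩ => ⟨[a], isPrime_singleton a, minimalRot_singleton a, ha⟩⟩

theorem Rep.aslMem (h : Rep p f) : ASLMem p :=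
  h.dich.imp (fun hn => ⟨⟨h.mnMem, sl3_of_ann h.ann.ann⟩, hn, h.ann.ann⟩) id

end

/-! ### Products -/

section
variable (L M : Transducer n)

lemma prod_dsts (w : Word n) (p : (prodT L M).Q) :
    dsts (prodT L M) w p = (dsts L w p.1, dsts M (outs L w p.1) p.2) := by
  induction w generalizing p with
  | nil => rfl
  | cons a w ih => rw [dsts, ih]; simp [dsts, outs, prodT, dsts_append]

lemma prod_outs (w : Word n) (p : (prodT L M).Q) :
    outs (prodT L M) w p = outs M (outs L w p.1) p.2 := by
  induction w generalizing p with
  | nil => rfl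
  | cons a w ih => rw [outs, ih]; simp [outs, prodT, outs_append]

variable {L M}

lemma prod_grow (gL : Grow L) (gM : Grow M) : Grow (prodT L M) := by
  intro m
  obtain ⟨N, hN⟩ := gM m
  obtain ⟨N', hN'⟩ := gL N
  exact ⟨N', fun w q hw => by rw [prod_outs]; exact hN _ _ (hN' _ _ hw)⟩

lemma prod_ss (gL : Grow L) (hL : StronglySync L) (hM : StronglySync M) :
    StronglySync (prodT L M) := by
  obtain ⟨k, hk⟩ := hL
  obtain ⟨l, hl⟩ := hM
  obtain ⟨N, hN⟩ := gL l
  refine ⟨k + N, fun w hw p q => ?_⟩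
  rw [prod_dsts, prod_dsts, ← List.take_append_drop k w]
  simp only [outs_append, dsts_append]
  rw [hk (w.take k) (by simp; omega) p.1 q.1]
  congr 1
  exact hl.of_le (hN _ _ (by simp; omega)) _ _

lemma prod_hmap (gL : Grow L) (gM : Grow M) (p : (prodT L M).Q) (x : ℕ → A n) :
    hmap (prodT L M) p x = hmap M p.2 (hmap L p.1 x) := by
  funext m
  obtain ⟨N, hN⟩ := prod_grow gL gM (m + 1)
  have h1 := hN (pre x N) p (by simp)
  rw [hmap_get (k := N) (by omega) default, hmap_split gL p.1 x N, hmap_app gM, ← prod_outs,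
    app_lt _ _ (by omega)]

end

theorem Ann.mul {L M : Transducer n} {α : L.Q → ℤ} {β : M.Q → ℤ}
    {f g : FullShift n → FullShift n} (hL : Ann L α f) (hM : Ann M β g) :
    Ann (coreT (prodT L M)) (fun q => α (cval (prodT L M) q).1 + β (cval (prodT L M) q).2)
      (fun x => g (f x)) := by
  have hss := prod_ss hL.grow hL.ss hM.ss
  refine Ann.ofCore (γ := fun q : (prodT L M).Q => α q.1 + β q.2) hss ?_ ?_
  · intro q w
    have h1 := hL.ann q.1 w
    have h2 := hM.ann q.2 (outs L w q.1)
    simp only [prod_dsts, prod_outs]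
    omega
  · intro x s hs i
    obtain ⟨u, hu⟩ := run_exists hL.ss x
    obtain ⟨t, ht⟩ := run_exists hM.ss (f x)
    -- the `M`-component at index `i` is the state of the run on `f x` at the write position
    have hr : Run (prodT L M) x fun i => (u i, t (i + α (u i))) := by
      intro i
      have e1 := hL.ann (u i) [x i]
      simp only [dsts, outs_singleton, List.length_singleton] at e1
      have e2 := ht.dsts (i + α (u i)) (L.out (x i) (u i)).length
      rw [hL.ind x u hu i] at e2
      have e3 : pre (hmap L (u i) (tail x i)) (L.out (x i) (u i)).length = L.out (x i) (u i) := by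
        rw [hmap_split hL.grow (u i) (tail x i) 1]
        have : pre (tail x i) 1 = [x i] := by simp [pre, tail]
        rw [this, outs_singleton, pre_app]
      rw [e3] at e2
      change (u (i + 1), _) = (L.tr (x i) (u i), dsts M (L.out (x i) (u i)) (t (i + α (u i))))
      rw [← e2, hu i]
      congr 2
      push_cast at e1
      omega
    have hi : s i = (u i, t (i + α (u i))) := congrFun (run_unique hss hs hr) i
    have h1 : (s i).1 = u i := congrArg Prod.fst hi
    have h2 : (s i).2 = t (i + α (u i)) := congrArg Prod.snd hi
    have e : hmap (prodT L M) (s i) (tail x i) = hmap M (s i).2 (hmap L (s i).1 (tail x i)) :=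
      prod_hmap hL.grow hM.grow _ _
    rw [e, h1, h2, ← add_assoc, hM.ind _ t ht, hL.ind x u hu]

theorem Rep.mul {p q : ASLPair n} {f g : FullShift n → FullShift n} (hp : Rep p f)
    (hq : Rep q g) : Rep (ASLmul p q) (fun x => g (f x)) :=
  (hp.ann.mul hq.ann).minRep

/-! ### Synchronous transducers -/

lemma sync_length {P : Transducer n} (h : Synchronous P) (w : Word n) (q : P.Q) :
    (outs P w q).length = w.length := by
  induction w generalizing q with
  | nil => rfl
  | cons a w ih => simp only [outs, List.length_append, ih, h a q, List.length_cons]; omega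

lemma sync_ann {P : Transducer n} (h : Synchronous P) (i : ℤ) : Annotation P fun _ => i := by
  intro q w
  rw [sync_length h]; ring

lemma sync_hmap {P : Transducer n} (h : Synchronous P) {x : FullShift n} {s : ℤ → P.Q}
    (hs : Run P x s) (j : ℤ) (m : ℕ) :
    hmap P (s j) (tail x j) m = (P.out (x (j + m)) (s (j + m))).getD 0 default := by
  have e : outs P (pre (tail x j) (m + 1)) (s j)
      = outs P (pre (tail x j) m) (s j) ++ P.out (x (j + m)) (s (j + m)) := by
    rw [pre_add, outs_append, hs.dsts, ← outs_singleton]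
    simp [pre, drp, tail]
  rw [hmap_get (k := m + 1) (by rw [sync_length h]; simp) default, e,
    List.getD_append_right _ _ _ _ (by rw [sync_length h]; simp), sync_length h]
  simp

lemma inducedMap_sync {P : Transducer n} (h : Synchronous P) (k : ℕ) (x : FullShift n) (m : ℤ) :
    inducedMap P (fun _ => 0) k x m = (P.out (x m) (forced P k x m)).getD 0 default := by
  classical
  have hex : ∃ p : ℤ × ℕ, p.2 < (outAt P k x p.1).length ∧ p.1 + 0 + (p.2 : ℤ) = m :=
    ⟨(m, 0), by simp [outAt, h _ _], by simp⟩
  have hc := hex.choose_spec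
  simp only [inducedMap]
  rw [dif_pos hex]
  generalize hex.choose = c at hc
  obtain ⟨h1, h2⟩ := hc
  rw [outAt, h] at h1
  have e2 : c.2 = 0 := by omega
  have e1 : c.1 = m := by omega
  rw [e2, e1, outAt]

lemma sync_induced_iff {P : Transducer n} (h : Synchronous P) {k : ℕ} (hk : SyncAt P k) (i : ℤ)
    (f : FullShift n → FullShift n) :
    (∀ x, f x = shiftZ i (inducedMap P (fun _ => 0) k x)) ↔
      ∀ x s, Run P x s → ∀ j, tail (f x) (j + i) = hmap P (s j) (tail x j) := by
  constructor
  · intro hf x s hs j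
    funext m
    rw [sync_hmap h hs, hf]
    simp only [tail, shiftZ]
    rw [inducedMap_sync h, ← hs.eq_forced hk, show j + i + (m : ℤ) - i = j + m by ring]
  · intro hf x
    funext m
    have hs := run_forced hk x
    have e := congrFun (hf x _ hs (m - i)) 0
    rw [sync_hmap h hs] at e
    simp only [shiftZ]
    rw [inducedMap_sync h]
    simpa [tail] using e

lemma PtildeMem.ann {P : Transducer n} (hP : PtildeMem P) {k : ℕ} (hk : SyncAt P k) {i : ℤ}
    {f : FullShift n → FullShift n}
    (hf : ∀ x, f x = shiftZ i (inducedMap P (fun _ => 0) k x)) : Ann P (fun _ => i) f :=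
  ⟨hP.2.1, hP.2.2.1, sync_ann hP.2.2.2.1 i, (sync_induced_iff hP.2.2.2.1 hk i f).1 hf⟩

theorem PtildeMem.rep {P : Transducer n} (hP : PtildeMem P) {k : ℕ} (hk : SyncAt P k) {i : ℤ}
    {f : FullShift n → FullShift n}
    (hf : ∀ x, f x = shiftZ i (inducedMap P (fun _ => 0) k x)) : Rep (phiPair P i) f :=
  (hP.ann hk hf).minRep

/-! ### Endomorphisms of the shift are sliding block codes -/

lemma shiftZ_shiftZ (i j : ℤ) (x : FullShift n) : shiftZ i (shiftZ j x) = shiftZ (i + j) x := by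
  funext m; simp only [shiftZ]; congr 1; ring

lemma shift_comm {f : FullShift n → FullShift n} (hf : ∀ x, f (shiftZ 1 x) = shiftZ 1 (f x))
    (i : ℤ) (x : FullShift n) : f (shiftZ i x) = shiftZ i (f x) := by
  have h0 : ∀ x : FullShift n, shiftZ 0 x = x := fun x => by funext m; simp [shiftZ]
  have hneg : ∀ x, f (shiftZ (-1) x) = shiftZ (-1) (f x) := by
    intro x
    have := hf (shiftZ (-1) x)
    rw [shiftZ_shiftZ, show (1 : ℤ) + -1 = 0 by ring, h0] at this
    rw [this, shiftZ_shiftZ, show (-1 : ℤ) + 1 = 0 by ring, h0]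
  induction i using Int.induction_on generalizing x with
  | zero => rw [h0, h0]
  | succ i ih => rw [← shiftZ_shiftZ, ih, hf, shiftZ_shiftZ]
  | pred i ih => rw [sub_eq_add_neg, ← shiftZ_shiftZ, ih, hneg, shiftZ_shiftZ]

lemma continuous_of_local {f : FullShift n → FullShift n}
    (h : ∀ i, ∃ r : ℕ, ∀ x y : FullShift n, (∀ j : ℤ, -r ≤ j → j ≤ r → x j = y j) →
      f x i = f y i) : Continuous f := by
  refine continuous_pi fun i => IsLocallyConstant.continuous ?_
  obtain ⟨r, hr⟩ := h i
  rw [IsLocallyConstant.iff_exists_open]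
  intro x
  refine ⟨Set.pi (Set.Icc (-(r : ℤ)) r) fun j => {x j},
    isOpen_set_pi (Set.finite_Icc _ _) fun _ _ => isOpen_discrete _, fun _ _ => rfl, ?_⟩
  intro y hy
  exact hr y x fun j h1 h2 => hy j ⟨h1, h2⟩

/-- The Curtis–Hedlund–Lyndon theorem. -/
theorem exists_radius {f : FullShift n → FullShift n} (hc : Continuous f)
    (hf : ∀ x, f (shiftZ 1 x) = shiftZ 1 (f x)) :
    ∃ r : ℕ, ∀ (x y : FullShift n) (i : ℤ), (∀ j, i - r ≤ j → j ≤ i + r → x j = y j) →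
      f x i = f y i := by
  have hcont : Continuous fun x => f x 0 := (continuous_apply 0).comp hc
  have hloc : ∀ x : FullShift n, ∃ r : ℕ, ∀ y : FullShift n,
      (∀ j : ℤ, -r ≤ j → j ≤ r → x j = y j) → f y 0 = f x 0 := by
    intro x
    have ho : IsOpen {y | f y 0 = f x 0} := (isOpen_discrete {f x 0}).preimage hcont
    obtain ⟨I, u, hu, hI⟩ := isOpen_pi_iff.1 ho x rfl
    refine ⟨I.sup Int.natAbs, fun y hy => hI fun j hj => ?_⟩
    have : j.natAbs ≤ I.sup Int.natAbs := Finset.le_sup (f := Int.natAbs) hj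
    rw [← hy j (by omega) (by omega)]
    exact (hu j hj).2
  choose r hr using hloc
  let V : FullShift n → Set (FullShift n) := fun x =>
    Set.pi (Set.Icc (-(r x : ℤ)) (r x)) fun j => {x j}
  obtain ⟨t, ht⟩ := (isCompact_univ (X := FullShift n)).elim_finite_subcover V
    (fun x => isOpen_set_pi (Set.finite_Icc _ _) fun _ _ => isOpen_discrete _)
    (fun x _ => Set.mem_iUnion.2 ⟨x, fun _ _ => rfl⟩)
  have key : ∀ x y : FullShift n, (∀ j : ℤ, -(t.sup r : ℕ) ≤ j → j ≤ (t.sup r : ℕ) → x j = y j) →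
      f x 0 = f y 0 := by
    intro x y hxy
    obtain ⟨z, hz, hxz⟩ := Set.mem_iUnion₂.1 (ht (Set.mem_univ x))
    have hle : r z ≤ t.sup r := Finset.le_sup (f := r) hz
    have hx : ∀ j : ℤ, -(r z : ℤ) ≤ j → j ≤ r z → z j = x j := fun j h1 h2 =>
      (hxz j ⟨h1, h2⟩).symm
    rw [hr z x hx, hr z y fun j h1 h2 => (hx j h1 h2).trans (hxy j (by omega) (by omega))]
  refine ⟨t.sup r, fun x y i hxy => ?_⟩
  have e : ∀ z, f z i = f (shiftZ (-i) z) 0 := fun z => by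
    rw [shift_comm hf]; simp [shiftZ]
  rw [e, e]
  refine key _ _ fun j h1 h2 => ?_
  simp only [shiftZ]
  exact hxy _ (by omega) (by omega)

/-- The de Bruijn transducer of memory `K` with local rule `G`: its states are the words of length
`K`, and it remembers the last `K` letters read. -/
noncomputable def deBruijn (K : ℕ) (G : Word n → A n) : Transducer n where
  Q := {w : Word n // w.length = K}
  fin := List.finite_length_eq (A n) K
  ne := ⟨⟨List.replicate K default, by simp⟩⟩
  tr := fun a w => ⟨(w.1 ++ [a]).drop 1, by simp [w.2]⟩
  out := fun a w => [G (w.1 ++ [a])]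

/-- The word remembered by a state of the de Bruijn transducer. -/
def dval (K : ℕ) (G : Word n → A n) (q : (deBruijn K G).Q) : Word n := q.1

lemma dval_injective (K : ℕ) (G : Word n → A n) : Function.Injective (dval K G) :=
  Subtype.val_injective

lemma dval_length (K : ℕ) (G : Word n → A n) (q : (deBruijn K G).Q) : (dval K G q).length = K :=
  q.2

lemma deBruijn_dsts (K : ℕ) (G : Word n → A n) (w : Word n) (q : (deBruijn K G).Q) :
    dval K G (dsts (deBruijn K G) w q) = (dval K G q ++ w).drop w.length := by
  induction w generalizing q with
  | nil => simp [dsts]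
  | cons a w ih =>
    rw [dsts, ih]
    have e : dval K G ((deBruijn K G).tr a q) = (dval K G q ++ [a]).drop 1 := rfl
    rw [e, ← List.drop_append_of_le_length (by simp), List.drop_drop, List.append_assoc]
    simp [add_comm]

lemma deBruijn_dsts_of_length (K : ℕ) (G : Word n → A n) {w : Word n} (hw : w.length = K)
    (q : (deBruijn K G).Q) : dval K G (dsts (deBruijn K G) w q) = w := by
  rw [deBruijn_dsts]
  have := dval_length K G q
  exact List.drop_left' (by omega)

lemma deBruijn_syncAt (K : ℕ) (G : Word n → A n) : SyncAt (deBruijn K G) K := fun w hw p q =>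
  dval_injective K G (by rw [deBruijn_dsts_of_length K G hw, deBruijn_dsts_of_length K G hw])

lemma deBruijn_isCore (K : ℕ) (G : Word n → A n) : IsCore (deBruijn K G) := fun q =>
  ⟨K, dval K G q, deBruijn_syncAt K G, dval_length K G q, fun p =>
    dval_injective K G (deBruijn_dsts_of_length K G (dval_length K G q) p)⟩

/-- Every endomorphism of the shift has the form `σ^i ∘ f_P`. -/
theorem exists_ptilde {f : FullShift n → FullShift n} (hc : Continuous f)
    (hf : ∀ x, f (shiftZ 1 x) = shiftZ 1 (f x)) :
    ∃ (i : ℤ) (P : Transducer n) (k : ℕ), PtildeMem P ∧ SyncAt P k ∧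
      ∀ x, f x = shiftZ i (inducedMap P (fun _ => 0) k x) := by
  obtain ⟨r, hr⟩ := exists_radius hc hf
  let G : Word n → A n := fun v => f (fun j => v.getD (j + r).toNat default) 0
  let D := deBruijn (2 * r) G
  have hsync : Synchronous D := fun a q => rfl
  have hss : SyncAt D (2 * r) := deBruijn_syncAt _ _
  have hD : Ann D (fun _ => -(r : ℤ)) f := by
    refine ⟨⟨_, hss⟩, deBruijn_isCore _ _, sync_ann hsync _, fun x s hs i => ?_⟩
    funext m
    rw [sync_hmap hsync hs]
    have e1 : (D.out (x (i + m)) (s (i + m))).getD 0 default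
        = G (dval _ _ (s (i + m)) ++ [x (i + m)]) := rfl
    have e2 : dval (2 * r) G (s (i + m)) = pre (tail x (i + m - (2 * r : ℕ))) (2 * r) := by
      have := hs.dsts (i + m - (2 * r : ℕ)) (2 * r)
      rw [sub_add_cancel] at this
      rw [this]
      exact deBruijn_dsts_of_length _ _ (pre_length _ _) _
    have e3 : pre (tail x (i + m - (2 * r : ℕ))) (2 * r) ++ [x (i + m)]
        = pre (tail x (i + m - (2 * r : ℕ))) (2 * r + 1) := by
      rw [pre_add]
      simp [pre, drp, tail]
    rw [e1, e2, e3]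
    have e4 : tail (f x) (i + -(r : ℤ)) m = f (shiftZ (-(i + m - r)) x) 0 := by
      rw [shift_comm hf]
      simp only [tail, shiftZ]
      congr 1; ring
    rw [e4]
    refine hr _ _ 0 fun j h1 h2 => ?_
    rw [getD_pre _ (by omega)]
    simp only [shiftZ, tail]
    congr 1
    push_cast
    omega
  have hcp := compat_of_synchronous hsync
  have hq := hD.quot hcp fun _ _ _ => rfl
  have hqs : Synchronous (quotT D) := fun a c => by
    rw [← qmk_out D c, quot_out hD.grow hcp]
    exact hsync _ _
  have hk : SyncAt (quotT D) (2 * r) := quot_syncAt hD.grow hcp hss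
  exact ⟨-(r : ℤ), quotT D, 2 * r,
    ⟨circuits_of_ann hq.ann, hq.ss, hq.core, hqs, quot_weaklyMinimal hD.grow hcp⟩, hk,
    (sync_induced_iff hqs hk _ f).2 hq.ind⟩

/-! ### Every annotated transducer induces an endomorphism -/

lemma hmap_consistent {T : Transducer n} {γ : T.Q → ℤ} (ha : Annotation T γ) {x : FullShift n}
    {s : ℤ → T.Q} (hs : Run T x s) {i i' m : ℤ} (hi : i ≤ i') (hm : i' + γ (s i') ≤ m) :
    hmap T (s i) (tail x i) (m - i - γ (s i)).toNat
      = hmap T (s i') (tail x i') (m - i' - γ (s i')).toNat := by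
  obtain ⟨K, rfl⟩ : ∃ K : ℕ, i' = i + K := ⟨(i' - i).toNat, by omega⟩
  have hlen := ha (s i) (pre (tail x i) K)
  rw [← hs.dsts, pre_length] at hlen
  rw [hmap_split (grow_of_ann ha) (s i) _ K, app_ge' _ _ (by omega), drp_tail, ← hs.dsts]
  congr 1
  omega

theorem exists_induced {T : Transducer n} {γ : T.Q → ℤ} (hss : StronglySync T) (hc : IsCore T)
    (ha : Annotation T γ) : ∃ f : EndShift n, Ann T γ f.1 := by
  obtain ⟨k, hk⟩ := hss
  obtain ⟨C, hC⟩ := exists_bound γ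
  let F : FullShift n → FullShift n := fun x m =>
    hmap T (forced T k x (m - C)) (tail x (m - C)) (m - (m - C) - γ (forced T k x (m - C))).toNat
  have hforced : ∀ {x y : FullShift n} {i : ℤ}, (∀ j, i - k ≤ j → j < i → x j = y j) →
      forced T k x i = forced T k y i := by
    intro x y i h
    simp only [forced, window_eq]
    congr 1
    simp only [pre, List.map_inj_left, List.mem_range, tail]
    intro j hj
    exact h _ (by omega) (by omega)
  have hcont : Continuous F := by
    refine continuous_of_local fun m => ?_
    obtain ⟨N, hN⟩ := hmap_congr (grow_of_ann ha) (2 * C)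
    refine ⟨m.natAbs + C + k + N, fun x y hxy => ?_⟩
    have e : forced T k x (m - C) = forced T k y (m - C) :=
      hforced fun j h1 h2 => hxy j (by omega) (by omega)
    have hb := hC (forced T k y (m - C))
    simp only [F]
    rw [e]
    refine hN _ _ _ (fun j hj => ?_) _ (by omega)
    exact hxy _ (by omega) (by omega)
  have hcomm : ∀ x, F (shiftZ 1 x) = shiftZ 1 (F x) := by
    intro x
    funext m
    have e1 : ∀ i, tail (shiftZ 1 x) i = tail x (i - 1) := fun i => by
      funext j; simp only [tail, shiftZ]; congr 1; ring
    have e2 : ∀ i, forced T k (shiftZ 1 x) i = forced T k x (i - 1) := fun i => by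
      simp only [forced, window_eq, e1]
      rw [sub_right_comm]
    simp only [F, shiftZ]
    rw [e1, e2, sub_right_comm m (C : ℤ) 1]
    congr 1
    ring_nf
  refine ⟨⟨F, hcont, hcomm⟩, ⟨k, hk⟩, hc, ha, fun x s hs i => ?_⟩
  funext j
  have hs' : s = forced T k x := run_unique ⟨k, hk⟩ hs (run_forced hk x)
  have e : F x (i + γ (s i) + j) = hmap T (s (i + γ (s i) + j - C)) (tail x (i + γ (s i) + j - C))
      (i + γ (s i) + j - (i + γ (s i) + j - C) - γ (s (i + γ (s i) + j - C))).toNat := by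
    simp only [F, hs']
  have hb := hC (s (i + γ (s i) + j - C))
  have hj : j = (i + γ (s i) + j - i - γ (s i)).toNat := by omega
  simp only [tail] at e ⊢
  rw [e]
  change _ = hmap T (s i) (tail x i) j
  conv_rhs => rw [hj]
  rcases le_total i (i + γ (s i) + j - C) with hle | hle
  · exact (hmap_consistent ha hs hle (by omega)).symm
  · exact hmap_consistent ha hs hle (by omega)

/-- The Lipschitz condition on circuits integrates to an annotation: measure the excess of
output over input along a path from a base state. -/
theorem exists_annotation {T : Transducer n} (hc : IsCore T) (h : SL3 T) :
    ∃ α : T.Q → ℤ, Annotation T α := by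
  have hreach : ∀ p q : T.Q, ∃ w, dsts T w p = q := fun p q => by
    obtain ⟨k, w, -, -, hw⟩ := hc q
    exact ⟨w, hw p⟩
  let q₀ : T.Q := Classical.choice T.ne
  choose W hW using hreach q₀
  refine ⟨fun q => (outs T (W q) q₀).length - (W q).length, fun q v => ?_⟩
  obtain ⟨u, hu⟩ := hreach (dsts T v q) q₀
  have h1 := h q₀ (W q ++ v ++ u) (by rw [dsts_append, dsts_append, hW, hu])
  have h2 := h q₀ (W (dsts T v q) ++ u) (by rw [dsts_append, hW, hu])
  rw [outs_append, outs_append, dsts_append, hW] at h1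
  rw [outs_append, hW] at h2
  simp only [List.length_append] at h1 h2
  beta_reduce
  omega

/-! ### The identity transducer -/

lemma outs_one (w : Word n) (q : (oneT : Transducer n).Q) : outs oneT w q = w := by
  induction w generalizing q with
  | nil => rfl
  | cons a w ih => rw [outs, ih]; rfl

lemma grow_one : Grow (oneT : Transducer n) := fun m => ⟨m, fun w q h => by rwa [outs_one]⟩

lemma hmap_one (q : (oneT : Transducer n).Q) (x : ℕ → A n) : hmap oneT q x = x := by
  funext m
  rw [hmap_get (k := m + 1) (by simp [outs_one]) default, outs_one, getD_pre _ (by omega)]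

lemma noIncomplete_one : NoIncomplete (oneT : Transducer n) := fun q =>
  ⟨fun _ => 0, fun _ => 1, by simp [hmap_one]⟩

lemma rep_one : Rep (ASLone : ASLPair n) fun x => x where
  ann :=
    { ss := ⟨0, fun _ _ _ _ => rfl⟩
      core := fun q => ⟨0, [], fun _ _ _ _ => rfl, rfl, fun _ => rfl⟩
      ann := fun q w => by
        have e : outs (ASLone : ASLPair n).1 w q = w := outs_one w q
        rw [e]; simp [ASLone]
      ind := fun x s _ i => by
        have e : hmap (ASLone : ASLPair n).1 (s i) (tail x i) = tail x i := hmap_one _ _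
        rw [e]; simp [ASLone] }
  wm := fun _ _ _ => rfl
  dich := Or.inl noIncomplete_one

lemma Rep.omegaEq_one {p : ASLPair n} (h : Rep p fun x => x) : OmegaEq p.1 oneT := by
  rcases h.aslEq rep_one with ⟨F, hF, -⟩ | ⟨a, ha, -⟩
  · exact ⟨F, hF⟩
  · have h0 : (0 : A n) = a := h.const ha (fun _ => 0) 0
    have h1 : (1 : A n) = a := h.const ha (fun _ => 1) 0
    exact absurd (h0.trans h1.symm) (by simp)

/-- An annotated transducer whose underlying transducer is the identity induces a power of the
shift. -/
lemma Ann.eq_shift {T : Transducer n} {γ : T.Q → ℤ} {f : FullShift n → FullShift n}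
    (h : Ann T γ f) (h1 : OmegaEq T oneT) : ∃ c, ∀ x, f x = shiftZ c x := by
  obtain ⟨F, hF⟩ := h1
  obtain ⟨q₀⟩ := T.ne
  have hsub : ∀ q, q = q₀ := fun q => F.injective (Subsingleton.elim (α := PUnit) _ _)
  refine ⟨γ q₀, fun x => ?_⟩
  obtain ⟨s, hs⟩ := run_exists h.ss x
  funext m
  have e := congrFun (h.ind x s hs (m - γ q₀)) 0
  rw [hF, hmap_one, hsub (s _)] at e
  simpa [tail, shiftZ] using e

/-! ### Units of the monoid of annotated transducers -/

/-- If the minimal representative of `T` is the identity, then circuits of `T` preserve length: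
removing the incomplete response changes the output length along a circuit by a telescoping sum. -/
lemma length_of_minRep_one {T : Transducer n} (g : Grow T) (hss : StronglySync T) (hc : IsCore T)
    (h1 : OmegaEq (minRep T) oneT) {q : T.Q} {Γ : Word n} (hq : dsts T Γ q = q) :
    (outs T Γ q).length = Γ.length := by
  obtain ⟨F, hF⟩ := h1
  by_cases hf : ∀ p, FiniteExtent T p
  · have hss' : StronglySync (removeIncomplete T) := hss.imp fun _ => rem_syncAt
    have gR := rem_grow g hf
    have nR := rem_noIncomplete g hf
    have gC := core_grow hss' gR
    have nC := core_noIncomplete hss' nR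
    let q' : (removeIncomplete T).Q := q
    have hq' : CoreState (removeIncomplete T) q' := by
      obtain ⟨k, w, hk, hw, h⟩ := hc q
      exact ⟨k, w, rem_syncAt hk, hw, fun p => (rem_dsts w p).trans (h _)⟩
    let c : (coreT (removeIncomplete T)).Q := ⟨q', Or.inl hq'⟩
    have e : hmap (removeIncomplete T) q' = hmap oneT (F (qmk _ c)) :=
      ((quot_hmap gC (compat_of_noIncomplete gC nC) c).trans (core_hmap hss' c)).symm.trans
        (hF (qmk _ c))
    have e1 := (dsts_outs_of_noIncomplete gR grow_one nR noIncomplete_one e Γ).1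
    have e2 := rem_outs_length g hf Γ q'
    rw [e1, outs_one] at e2
    have e3 : dsts T Γ (rval T q') = rval T q' := hq
    rw [e3] at e2
    have e4 : outs T Γ (rval T q') = outs T Γ q := rfl
    rw [e4] at e2
    omega
  · -- in the degenerate case the outputs of `minRep T` do not depend on the input
    exfalso
    have hout : ∀ a c, (minRep T).out a c = minimalRot (periodicRoot T) := fun a c => if_neg hf
    obtain ⟨c⟩ := (minRep T).ne
    have e : hmap (minRep T) c (fun _ => 0) = hmap (minRep T) c fun _ => 1 := by
      have e0 : (fun k => outs (minRep T) ((List.range k).map fun _ => (0 : A n)) c)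
          = fun k => outs (minRep T) ((List.range k).map fun _ => 1) c := by
        funext k
        rw [outs_of_outConst hout, outs_of_outConst hout, List.length_map, List.length_map]
      classical
      funext m
      exact congrArg (fun o : ℕ → Word n =>
        if h : ∃ k, m < (o k).length then (o h.choose).getD m default else default) e0
    rw [hF, hmap_one, hmap_one] at e
    exact absurd (congrFun e 0) (by simp)

lemma dsts_replicate {T : Transducer n} {q : T.Q} {w : Word n} (h : dsts T w q = q) (k : ℕ) :
    dsts T (List.replicate k w).flatten q = q := by
  induction k with
  | zero => rfl
  | succ k ih => rw [List.replicate_succ, List.flatten_cons, dsts_append, h, ih]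

lemma length_replicate_flatten {w : Word n} (hw : w ≠ []) (k : ℕ) :
    k ≤ (List.replicate k w).flatten.length := by
  have := List.length_pos_iff.2 hw
  simp only [List.length_flatten, List.map_replicate, List.sum_replicate, smul_eq_mul]
  nlinarith

lemma exists_fixed {T : Transducer n} (h : StronglySync T) {w : Word n} (hw : w ≠ []) :
    ∃ q, dsts T w q = q := by
  obtain ⟨k, hk⟩ := h
  obtain ⟨q⟩ := T.ne
  refine ⟨dsts T (List.replicate k w).flatten q, ?_⟩
  have e : (List.replicate k w).flatten ++ w = w ++ (List.replicate k w).flatten := by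
    rw [← List.flatten_cons, ← List.replicate_succ, List.replicate_succ', List.flatten_append]
    simp
  rw [← dsts_append, e, dsts_append]
  exact hk.of_le (length_replicate_flatten hw k) _ _

lemma coreState_of_fixed {T : Transducer n} (h : StronglySync T) {w : Word n} (hw : w ≠ [])
    {q : T.Q} (hq : dsts T w q = q) : CoreState T q := by
  obtain ⟨k, hk⟩ := h
  have hl := length_replicate_flatten hw k
  exact ⟨_, _, hk.mono hl, rfl, fun p => (hk.of_le hl p q).trans (dsts_replicate hq k)⟩

/-- A left inverse in `M_n` of an element satisfying the Lipschitz condition satisfies it too. -/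
lemma sl3_of_inverse {U L : Transducer n} (cU : CircuitsNonempty U) (hU : StronglySync U)
    (gL : Grow L) (hL : StronglySync L) (h3 : SL3 L) (h1 : OmegaEq (mulT U L) oneT) : SL3 U := by
  intro u Γ hu
  by_cases hΓ : Γ = []
  · subst hΓ; rfl
  have gU := grow_of_circuits cU
  have hw := cU u Γ hΓ hu
  obtain ⟨l, hl⟩ := exists_fixed hL hw
  have hss := prod_ss gU hU hL
  let p : (prodT U L).Q := (u, l)
  have hp : dsts (prodT U L) Γ p = p := by
    rw [prod_dsts]; exact Prod.ext hu hl
  let c : (coreT (prodT U L)).Q := ⟨p, Or.inl (coreState_of_fixed hss hΓ hp)⟩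
  have hc : dsts (coreT (prodT U L)) Γ c = c :=
    cval_injective _ ((core_dsts hss Γ c).trans hp)
  have e := length_of_minRep_one (core_grow hss (prod_grow gU gL)) (core_ss hss)
    (core_isCore hss) h1 hc
  have e2 : outs (coreT (prodT U L)) Γ c = outs L (outs U Γ u) l :=
    (core_outs hss Γ c).trans (prod_outs U L Γ p)
  rw [e2, h3 _ _ hl] at e
  exact e

/-- If `f` has a continuous shift-commuting inverse `g`, then the states of a transducer inducing
`f` act injectively and with clopen image: with a fixed past forcing the state `q`, a sequence `z`
lies in the image of `h_q` exactly when `g` maps the corresponding point of the shift back to a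
point with that past, which only needs to be checked at finitely many coordinates. -/
lemma Ann.injective_isClopen {T : Transducer n} {γ : T.Q → ℤ} {f g : FullShift n → FullShift n}
    (h : Ann T γ f) (hc : Continuous g) (hg : ∀ x, g (shiftZ 1 x) = shiftZ 1 (g x))
    (hgf : ∀ x, g (f x) = x) (hfg : ∀ x, f (g x) = x) (q : T.Q) :
    Function.Injective (hmap T q) ∧ IsClopen (Set.range (hmap T q)) := by
  obtain ⟨x₀, hx₀⟩ := exists_past (h.core q)
  have hrun : ∀ y, ∃ s, Run T (glue x₀ y) s ∧ s 0 = q := fun y => by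
    obtain ⟨s, hs⟩ := run_exists h.ss (glue x₀ y)
    exact ⟨s, hs, hx₀ _ s (fun j hj => glue_neg x₀ y hj) hs⟩
  -- the point with the past written by `x₀` and with future `z`
  let b : FullShift n := f (glue x₀ fun _ => default)
  let E : (ℕ → A n) → FullShift n := fun z j => if γ q ≤ j then z (j - γ q).toNat else b j
  have hE : ∀ y, f (glue x₀ y) = E (hmap T q y) := by
    intro y
    obtain ⟨s, hs, h0⟩ := hrun y
    funext j
    by_cases hj : γ q ≤ j
    · have e := congrFun (h.ind _ s hs 0) (j - γ q).toNat
      rw [h0, tail_glue] at e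
      simp only [E, if_pos hj]
      rw [← e]
      simp only [tail]
      congr 1
      omega
    · simp only [E, if_neg hj]
      refine h.left_det hs (i := 0) (fun j hj => ?_) (by rw [h0]; omega)
      rw [glue_neg _ _ hj, glue_neg _ _ hj]
  have hE_inj : Function.Injective E := by
    intro z z' e
    funext m
    have := congrFun e (γ q + m)
    simpa [E] using this
  constructor
  · intro y y' e
    have e1 : glue x₀ y = glue x₀ y' := by rw [← hgf (glue x₀ y), hE, e, ← hE, hgf]
    rw [← tail_glue x₀ y, e1, tail_glue]
  · obtain ⟨r, hr⟩ := exists_radius hc hg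
    have hrange : Set.range (hmap T q)
        = ⋂ j ∈ Set.Ico (γ q - r) 0, (fun z => g (E z) j) ⁻¹' {x₀ j} := by
      ext z
      simp only [Set.mem_range, Set.mem_iInter, Set.mem_preimage, Set.mem_singleton_iff,
        Set.mem_Ico]
      constructor
      · rintro ⟨y, rfl⟩ j ⟨-, hj⟩
        rw [← hE, hgf, glue_neg _ _ hj]
      · intro hz
        have hneg : ∀ j < 0, g (E z) j = x₀ j := by
          intro j hj
          by_cases hjr : γ q - r ≤ j
          · exact hz j ⟨hjr, hj⟩
          · have e : g (E z) j = g b j := hr _ _ j fun m _ hm => if_neg (by omega)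
            rw [e]
            simp only [b]
            rw [hgf, glue_neg _ _ hj]
        refine ⟨tail (g (E z)) 0, hE_inj ?_⟩
        rw [← hE]
        have e : glue x₀ (tail (g (E z)) 0) = g (E z) := by
          conv_rhs => rw [← glue_tail (g (E z))]
          funext j
          by_cases hj : j < 0
          · rw [glue_neg _ _ hj, glue_neg _ _ hj, hneg j hj]
          · simp only [glue, if_pos (not_lt.1 hj)]
        rw [e, hfg]
    have hEc : Continuous E := by
      refine continuous_pi fun j => ?_
      by_cases hj : γ q ≤ j
      · simp only [E, if_pos hj]; exact continuous_apply _
      · simp only [E, if_neg hj]; exact continuous_const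
    rw [hrange]
    refine (Set.finite_Ico _ _).isClopen_biInter fun j _ => ?_
    exact (isClopen_discrete {x₀ j}).preimage
      ((continuous_apply j).comp (hc.comp hEc))

lemma Rep.noIncomplete_of_injective {p : ASLPair n} {f : FullShift n → FullShift n} (h : Rep p f)
    (hf : Function.Injective f) : NoIncomplete p.1 := by
  refine h.dich.resolve_right ?_
  rintro ⟨a, ha⟩
  have e : f (fun _ => 0) = f fun _ => 1 := by
    funext j; rw [h.const ha, h.const ha]
  exact absurd (congrFun (hf e) 0) (by simp)

theorem Rep.alMem {p q : ASLPair n} {f g : EndShift n} (hp : Rep p f.1) (hq : Rep q g.1)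
    (hgf : ∀ x, g.1 (f.1 x) = x) (hfg : ∀ x, f.1 (g.1 x) = x) : ALMem p := by
  have e1 : Rep (ASLmul p q) fun x => x := by
    have := hp.mul hq
    simpa only [hgf] using this
  have e2 : Rep (ASLmul q p) fun x => x := by
    have := hq.mul hp
    simpa only [hfg] using this
  exact ⟨⟨⟨⟨hp.mnMem, hp.ann.injective_isClopen g.2.1 g.2.2 hgf hfg⟩, q.1,
    ⟨hq.mnMem, hq.ann.injective_isClopen f.2.1 f.2.2 hfg hgf⟩, e1.omegaEq_one, e2.omegaEq_one⟩,
    sl3_of_ann hp.ann.ann⟩, hp.ann.ann⟩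

lemma continuous_shiftZ (i : ℤ) : Continuous (shiftZ i : FullShift n → FullShift n) :=
  continuous_pi fun _ => continuous_apply _

theorem Rep.exists_inverse {p : ASLPair n} {f : EndShift n} (hp : Rep p f.1) (h : ALMem p) :
    ∃ g : EndShift n, (∀ x, g.1 (f.1 x) = x) ∧ ∀ x, f.1 (g.1 x) = x := by
  obtain ⟨⟨⟨-, U, ⟨⟨cU, sU, kU, -⟩, -⟩, hLU, hUL⟩, h3⟩, -⟩ := h
  obtain ⟨β, hβ⟩ := exists_annotation kU (sl3_of_inverse cU sU hp.ann.grow hp.ann.ss h3 hUL)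
  obtain ⟨g, hg⟩ := exists_induced sU kU hβ
  obtain ⟨c, hc⟩ := (hp.ann.mul hg).minRep.ann.eq_shift hLU
  obtain ⟨d, hd⟩ := (hg.mul hp.ann).minRep.ann.eq_shift hUL
  have h0 : ∀ x : FullShift n, shiftZ 0 x = x := fun x => by funext m; simp [shiftZ]
  have hl : ∀ x, shiftZ (-c) (g.1 (f.1 x)) = x := fun x => by
    rw [hc, shiftZ_shiftZ, neg_add_cancel, h0]
  have hr : ∀ x, f.1 (shiftZ (-d) (g.1 x)) = x := fun x => by
    rw [shift_comm f.2.2, hd, shiftZ_shiftZ, neg_add_cancel, h0]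
  refine ⟨⟨fun x => shiftZ (-c) (g.1 x), (continuous_shiftZ _).comp g.2.1, fun x => ?_⟩, hl,
    fun x => ?_⟩
  · have e : g.1 (shiftZ 1 x) = shiftZ 1 (g.1 x) := g.2.2 x
    change shiftZ (-c) (g.1 (shiftZ 1 x)) = shiftZ 1 (shiftZ (-c) (g.1 x))
    rw [e, shiftZ_shiftZ, shiftZ_shiftZ, add_comm]
  · -- `f` has a left and a right inverse, which therefore agree
    have e := hl (shiftZ (-d) (g.1 x))
    rw [hr] at e
    exact (congrArg f.1 e).trans (hr x)

/-! ### Surjectivity -/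

theorem exists_rep_of_aslMem {p : ASLPair n} (h : ASLMem p) (φ : EndShift n → ASLPair n)
    (hφ : ∀ f, Rep (φ f) f.1) : ∃ f : EndShift n, ASLEq (φ f) p := by
  rcases h with ⟨⟨⟨-, hss, hc, hm⟩, -⟩, hn, ha⟩ | ⟨a, ha⟩
  · have hwm : WeaklyMinimal p.1 := by
      rcases hm with ⟨-, hw⟩ | ⟨x, -, -, F, -⟩
      · exact hw
      · exact fun s t _ => F.injective (Subsingleton.elim (α := PUnit) _ _)
    obtain ⟨f, hf⟩ := exists_induced hss hc ha
    exact ⟨f, (hφ f).aslEq ⟨hf, hwm, Or.inl hn⟩⟩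
  · -- the element `(Z_a, ∞)` comes from the constant endomorphism
    let f : EndShift n := ⟨fun _ _ => a, continuous_const, fun _ => rfl⟩
    refine ⟨f, Or.inr ?_⟩
    rcases (hφ f).dich with hn | ⟨b, hb⟩
    · exact absurd (fun _ _ => rfl) ((hφ f).not_const hn a)
    · have e : a = b := (hφ f).const hb (fun _ => a) 0
      exact ⟨a, e ▸ hb, ha⟩

/-- The map `φ : End(X_n^ℤ, σ_n) → ASL_n` sending `σ_n^i ∘ f_P`
(for `i : ℤ` and `P ∈ \widetilde{P}_n`) to the pair `([P], α)`, where `[P]` is the minimal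
representative of `P` and `α` is the annotation of `[P]` defined by
`α ((q) κ) = i + |Λ(ε, q)|` for each state `q` of `P` (this is the pair `phiPair P i`),
is a monoid isomorphism; moreover its restriction to `Aut(X_n^ℤ, σ_n)` is a group
isomorphism onto `AL_n`. -/
theorem end_iso_ASLn (n : ℕ) :
    ∃ φ : EndShift n → ASLPair n,
      (∀ f : EndShift n, ∃ (i : ℤ) (P : Transducer n) (k : ℕ),
          PtildeMem P ∧ SyncAt P k ∧
          (∀ x, f.1 x = shiftZ i (inducedMap P (fun _ => 0) k x)) ∧
          ASLEq (φ f) (phiPair P i)) ∧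
      (∀ (f : EndShift n) (i : ℤ) (P : Transducer n) (k : ℕ),
          PtildeMem P → SyncAt P k →
          (∀ x, f.1 x = shiftZ i (inducedMap P (fun _ => 0) k x)) →
          ASLEq (φ f) (phiPair P i)) ∧
      (∀ f : EndShift n, ASLMem (φ f)) ∧
      (∀ f g h : EndShift n, (∀ x, h.1 x = g.1 (f.1 x)) →
          ASLEq (φ h) (ASLmul (φ f) (φ g))) ∧
      (∀ f g : EndShift n, ASLEq (φ f) (φ g) → f = g) ∧
      (∀ p : ASLPair n, ASLMem p → ∃ f : EndShift n, ASLEq (φ f) p) ∧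
      (∀ f : EndShift n,
        (∃ g : EndShift n, (∀ x, g.1 (f.1 x) = x) ∧ ∀ x, f.1 (g.1 x) = x) ↔
          ALMem (φ f)) := by
  choose i P k hP hk hf using fun f : EndShift n => exists_ptilde f.2.1 f.2.2
  let φ : EndShift n → ASLPair n := fun f => phiPair (P f) (i f)
  have hφ : ∀ f, Rep (φ f) f.1 := fun f => (hP f).rep (hk f) (hf f)
  refine ⟨φ, fun f => ⟨i f, P f, k f, hP f, hk f, hf f, (hφ f).aslEq (hφ f)⟩,
    fun f i P k hP hk hf => (hφ f).aslEq (hP.rep hk hf), fun f => (hφ f).aslMem,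
    fun f g h hh => ?_, fun f g h => Subtype.ext ((hφ f).eq_of_aslEq (hφ g) h),
    fun p hp => exists_rep_of_aslMem hp φ hφ,
    fun f => ⟨fun ⟨g, hgf, hfg⟩ => (hφ f).alMem (hφ g) hgf hfg, (hφ f).exists_inverse⟩⟩
  have e : h.1 = fun x => g.1 (f.1 x) := funext hh
  exact (e ▸ hφ h).aslEq ((hφ f).mul (hφ g))

end ShiftPaper
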